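/- arXiv:1603.04140 — 3 statements merged into one kernel-verified Lean document; each statement's English description precedes it below -/
import Mathlib

section
/- Suppose the Q-matrix satisfies condition C1, the item parameter matrix Θ satisfies condition C2, and (Θ, p) and (Θ̄, p̄) are two parameter pairs each satisfying the model restrictions (R1) and (R2) with respect to Q. If P(R = r | Q, Θ, p) = P(R = r | Q, Θ̄, p̄) for every response vector r ∈ {0,1}^J, then Θ = Θ̄ and p = p̄ (i.e., the restricted latent class model parameters are identifiable). -/
open Finset

/-- `u ⪰ v`: componentwise domination of binary vectors. -/
def dominates {n : ℕ} (u v : Fin n → Bool) : Prop := ∀ i, v i = true → u i = true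

instance {n : ℕ} (u v : Fin n → Bool) : Decidable (dominates u v) :=
  inferInstanceAs (Decidable (∀ i, v i = true → u i = true))

/-- The all-zeros attribute profile. -/
def allZero (K : ℕ) : Fin K → Bool := fun _ => false

/-- The all-ones attribute profile. -/
def allOne (K : ℕ) : Fin K → Bool := fun _ => true

/-- The `k`-th standard basis attribute profile `e_k`. -/
def basis {K : ℕ} (k : Fin K) : Fin K → Bool := fun i => decide (i = k)

/-- `P(R = r | Q, Θ, p) = Σ_α p_α ∏_j θ_{j,α}^{r_j} (1-θ_{j,α})^{1-r_j}`. -/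
def respProb {J K : ℕ} (θ : Fin J → (Fin K → Bool) → ℝ) (p : (Fin K → Bool) → ℝ)
    (r : Fin J → Bool) : ℝ :=
  ∑ α : Fin K → Bool, p α * ∏ j, (if r j then θ j α else 1 - θ j α)

/-- The `(r, α)` entry of the T-matrix: `t_{r,α}(Θ) = ∏_{j : r_j = 1} θ_{j,α}`. -/
def tEntry {J K : ℕ} (θ : Fin J → (Fin K → Bool) → ℝ) (r : Fin J → Bool)
    (α : Fin K → Bool) : ℝ :=
  ∏ j, (if r j then θ j α else 1)

/-- The `r`-entry of the vector `T(Q,Θ) p`. -/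
def Tp {J K : ℕ} (θ : Fin J → (Fin K → Bool) → ℝ) (p : (Fin K → Bool) → ℝ)
    (r : Fin J → Bool) : ℝ :=
  ∑ α : Fin K → Bool, tEntry θ r α * p α

/-- All item parameters lie in the open unit interval. -/
def ThetaValid {J K : ℕ} (θ : Fin J → (Fin K → Bool) → ℝ) : Prop :=
  ∀ j α, θ j α ∈ Set.Ioo (0 : ℝ) 1

/-- A valid class distribution: every `p_α ∈ (0,1)` and `Σ_α p_α = 1`. -/
def PValid {K : ℕ} (p : (Fin K → Bool) → ℝ) : Prop :=
  (∀ α, p α ∈ Set.Ioo (0 : ℝ) 1) ∧ ∑ α : Fin K → Bool, p α = 1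

/-- Model restriction (R1) with respect to the Q-matrix `Q`. -/
def R1 {J K : ℕ} (Q : Fin J → Fin K → Bool) (θ : Fin J → (Fin K → Bool) → ℝ) : Prop :=
  ∀ j : Fin J,
    (∀ α α' : Fin K → Bool, dominates α (Q j) → dominates α' (Q j) → θ j α = θ j α') ∧
    (∀ αs α' : Fin K → Bool, dominates αs (Q j) → θ j α' ≤ θ j αs) ∧
    (∀ α' : Fin K → Bool, θ j (allZero K) ≤ θ j α')

/-- Model restriction (R2) with respect to the Q-matrix `Q`. -/
def R2 {J K : ℕ} (Q : Fin J → Fin K → Bool) (θ : Fin J → (Fin K → Bool) → ℝ) : Prop :=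
  ∀ (k : Fin K) (j : Fin J), Q j = basis k →
    ∀ α : Fin K → Bool, α k = false → θ j α < θ j (allOne K)

/-- Condition (C1): the first `2K` rows of `Q` form two copies of the identity. -/
def C1 {J K : ℕ} (Q : Fin J → Fin K → Bool) : Prop :=
  ∀ (k : Fin K) (h1 : (k : ℕ) < J) (h2 : K + (k : ℕ) < J),
    Q ⟨k, h1⟩ = basis k ∧ Q ⟨K + (k : ℕ), h2⟩ = basis k

/-- Condition (C2): for every `k`, `(θ_{j,e_k})_{j > 2K} ≠ (θ_{j,0})_{j > 2K}`. -/
def C2 {J K : ℕ} (θ : Fin J → (Fin K → Bool) → ℝ) : Prop :=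
  ∀ k : Fin K, ∃ j : Fin J, 2 * K ≤ (j : ℕ) ∧ θ j (basis k) ≠ θ j (allZero K)

/-!
Equality of the response distributions says that `∑ α, p α * F (θ · α)` is the same for both
parameter pairs, for every `F` that is affine in each item parameter separately. For a profile `α`
and a copy `b` of the identity in `Q`, take as one factor of `F` the product of `x (b k) - c k` over
the attributes `k` missing from `α`, with `c k` the top value of item `b k`: it vanishes at every
profile not below `α`, so the sums become triangular in `α` and can be compared profile by profile.

First, with only one set of top values available, triangularity shows that every relation `F = 0`
among the items outside `b` that holds for one pair also holds for the other. The relation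
`(x j - θ j ⊥) * ∏ l, (x (a l) - θ (a l) ⊤) = 0`, where `a` is the other copy and `j` a further
item separating `e_k` from `⊥`, then forces the top values to agree. Once they do, triangularity
determines `p α` and all `θ j α` by induction on `α`.
-/

section MultiAffine

variable {ι κ R : Type*} [CommRing R]

/-- The polynomial functions of `x : ι → R` that involve only the coordinates in `S` and have degree
at most one in each of them, encoded as the span of the square-free monomials. -/
def multiAffine (R : Type*) [CommRing R] (S : Set ι) : Submodule R ((ι → R) → R) :=
  Submodule.span R ((fun (T : Finset ι) x => ∏ j ∈ T, x j) '' {T | ↑T ⊆ S})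

lemma multiAffine_mono {S T : Set ι} (h : S ⊆ T) : multiAffine R S ≤ multiAffine R T :=
  Submodule.span_mono (Set.image_mono fun _ hU => hU.trans h)

lemma prod_mem_multiAffine {S : Set ι} {T : Finset ι} (h : ↑T ⊆ S) :
    (fun x : ι → R => ∏ j ∈ T, x j) ∈ multiAffine R S :=
  Submodule.subset_span ⟨T, h, rfl⟩

lemma one_mem_multiAffine (S : Set ι) : (1 : (ι → R) → R) ∈ multiAffine R S := by
  simpa [Pi.one_def] using prod_mem_multiAffine (R := R) (S := S) (T := ∅) (by simp)

lemma eval_mem_multiAffine {S : Set ι} {j : ι} (hj : j ∈ S) :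
    (fun x : ι → R => x j) ∈ multiAffine R S := by
  simpa using prod_mem_multiAffine (R := R) (T := {j}) (by simpa using hj)

lemma eval_sub_const_mem_multiAffine {S : Set ι} {j : ι} (hj : j ∈ S) (c : R) :
    (fun x : ι → R => x j - c) ∈ multiAffine R S := by
  have hc : (c • 1 : (ι → R) → R) ∈ multiAffine R S :=
    Submodule.smul_mem _ c (one_mem_multiAffine S)
  convert Submodule.sub_mem _ (eval_mem_multiAffine hj) hc using 1
  ext x
  simp

lemma mul_mem_multiAffine {S T : Set ι} (hST : Disjoint S T) {F G : (ι → R) → R}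
    (hF : F ∈ multiAffine R S) (hG : G ∈ multiAffine R T) :
    F * G ∈ multiAffine R (S ∪ T) := by
  have hFG := Submodule.mul_mem_mul hF hG
  rw [multiAffine, multiAffine, Submodule.span_mul_span] at hFG
  refine Submodule.span_le.2 ?_ hFG
  rintro _ ⟨_, ⟨U, hU, rfl⟩, _, ⟨V, hV, rfl⟩, rfl⟩
  have hUV : Disjoint U V := Finset.disjoint_coe.1 (hST.mono hU hV)
  refine Submodule.subset_span ⟨U.disjUnion V hUV, ?_, ?_⟩
  · simpa using Set.union_subset_union hU hV
  · ext x
    exact Finset.prod_disjUnion hUV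

lemma prod_sub_const_mem_multiAffine {f : κ → ι} (hf : Function.Injective f) (s : Finset κ)
    (c : κ → R) :
    (fun x : ι → R => ∏ k ∈ s, (x (f k) - c k)) ∈ multiAffine R (f '' s) := by
  classical
  induction s using Finset.induction_on with
  | empty => simpa [Pi.one_def] using one_mem_multiAffine (R := R) (∅ : Set ι)
  | insert k s hk ih =>
    have hdisj : Disjoint {f k} (f '' s) := by simpa [hf.eq_iff] using hk
    have hfactor := eval_sub_const_mem_multiAffine (Set.mem_singleton (f k)) (c k)
    simp only [Finset.prod_insert hk, Finset.coe_insert, Set.image_insert_eq]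
    exact mul_mem_multiAffine hdisj hfactor ih

end MultiAffine

section Mixture

variable {ι A R : Type*} [CommRing R]

/-- The probability of the response vector `r` when item `j` is answered positively with probability
`x j`, independently across items. -/
def responseLikelihood [Fintype ι] (r : ι → Bool) (x : ι → R) : R :=
  ∏ j, if r j then x j else 1 - x j

lemma prod_eq_sum_responseLikelihood [Fintype ι] [DecidableEq ι] (T : Finset ι) (x : ι → R) :
    ∏ j ∈ T, x j =
      ∑ r ∈ Fintype.piFinset fun j => if j ∈ T then {true} else univ, responseLikelihood r x := by
  unfold responseLikelihood
  rw [← Finset.prod_univ_sum _ fun j (b : Bool) => if b then x j else 1 - x j,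
    ← Finset.prod_subset (Finset.subset_univ T)]
  · exact Finset.prod_congr rfl fun j hj => by simp [hj]
  · intro j _ hj
    simp [hj]

lemma multiAffine_le_span_responseLikelihood [Fintype ι] (S : Set ι) :
    multiAffine R S ≤ Submodule.span R (Set.range responseLikelihood) := by
  classical
  refine Submodule.span_le.2 ?_
  rintro _ ⟨T, -, rfl⟩
  have hexpand : (fun x : ι → R => ∏ j ∈ T, x j) =
      ∑ r ∈ Fintype.piFinset fun j => if j ∈ T then {true} else univ, responseLikelihood r := by
    ext x
    rw [Finset.sum_apply, prod_eq_sum_responseLikelihood]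
  change (fun x : ι → R => ∏ j ∈ T, x j) ∈ Submodule.span R _
  rw [hexpand]
  exact Submodule.sum_mem _ fun r _ => Submodule.subset_span ⟨r, rfl⟩

/-- The average `∑ α, p α * F (θ · α)` of a function `F` of the item parameters over the latent
classes, as a linear functional of `F`. -/
def mixtureMean [Fintype A] (θ : ι → A → R) (p : A → R) : ((ι → R) → R) →ₗ[R] R where
  toFun F := ∑ α, p α * F (θ · α)
  map_add' F G := by simp [mul_add, Finset.sum_add_distrib]
  map_smul' c F := by simp [Finset.mul_sum, mul_left_comm]

/-- Both mixtures give the same mean to every function of the item parameters that is affine in each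
of them; this is all that the response distribution knows about `(θ, p)`. -/
def SameMoments [Fintype A] (θ : ι → A → R) (p : A → R) (θb : ι → A → R) (pb : A → R) : Prop :=
  ∀ F ∈ multiAffine R Set.univ, mixtureMean θ p F = mixtureMean θb pb F

lemma SameMoments.symm [Fintype A] {θ θb : ι → A → R} {p pb : A → R}
    (hm : SameMoments θ p θb pb) : SameMoments θb pb θ p :=
  fun F hF => (hm F hF).symm

lemma sameMoments_of_responseLikelihood [Fintype ι] [Fintype A] {θ θb : ι → A → R} {p pb : A → R}
    (heq : ∀ r : ι → Bool,
      mixtureMean θ p (responseLikelihood r) = mixtureMean θb pb (responseLikelihood r)) :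
    SameMoments θ p θb pb :=
  fun _ hF => LinearMap.eqOn_span (Set.forall_mem_range.2 heq)
    (multiAffine_le_span_responseLikelihood _ hF)

end Mixture

lemma eq_of_sum_eq_sum_of_forall_ne {A M : Type*} [Fintype A] [AddCommMonoid M]
    [IsRightCancelAdd M] {y z : A → M} (hsum : ∑ β, y β = ∑ β, z β) (α : A)
    (hne : ∀ β ≠ α, y β = z β) : y α = z α := by
  classical
  rw [Fintype.sum_eq_add_sum_compl α, Fintype.sum_eq_add_sum_compl α z,
    Finset.sum_congr rfl fun β hβ => hne β (by simpa using hβ)] at hsum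
  exact add_right_cancel hsum

/-- The profile `e_k` possessing the attribute `k` only, for an arbitrary attribute type. -/
def unitProfile {κ : Type*} [DecidableEq κ] (k : κ) : κ → Bool := fun l => decide (l = k)

section MissingProd

variable {ι κ R : Type*} [Fintype κ] [CommRing R]

/-- The product of the factors `x (b k) - c k` over the attributes `k` missing from `α`. With
`c k` the top value of item `b k` it isolates the profiles below `α`. -/
def missingProd (b : κ → ι) (c : κ → R) (α : κ → Bool) (x : ι → R) : R :=
  ∏ k with α k = false, (x (b k) - c k)

lemma missingProd_mem_multiAffine {b : κ → ι} (hb : Function.Injective b) (c : κ → R)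
    (α : κ → Bool) : missingProd b c α ∈ multiAffine R (b '' {k | α k = false}) := by
  have hmem := prod_sub_const_mem_multiAffine hb {k | α k = false} c
  rwa [Finset.coe_filter_univ] at hmem

lemma sub_const_mul_missingProd_mem_multiAffine {a b : κ → ι}
    (ha : Function.Injective a) (hranges : Disjoint (Set.range a) (Set.range b)) {j : ι}
    (hj : j ∉ Set.range a ∪ Set.range b) (d : R) (c : κ → R) (α : κ → Bool) :
    (fun x : ι → R => (x j - d) * missingProd a c α x) ∈ multiAffine R (Set.range b)ᶜ := by
  obtain ⟨hja, hjb⟩ : j ∉ Set.range a ∧ j ∉ Set.range b := by simpa [not_or] using hj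
  have himage : a '' {k | α k = false} ⊆ Set.range a := Set.image_subset_range _ _
  have hdisj : Disjoint {j} (a '' {k | α k = false}) :=
    Set.disjoint_singleton_left.2 fun h => hja (himage h)
  have hsub : {j} ∪ a '' {k | α k = false} ⊆ (Set.range b)ᶜ :=
    Set.union_subset (Set.singleton_subset_iff.2 hjb) (himage.trans hranges.subset_compl_right)
  exact multiAffine_mono hsub (mul_mem_multiAffine hdisj
    (eval_sub_const_mem_multiAffine (Set.mem_singleton j) d) (missingProd_mem_multiAffine ha c α))

variable [DecidableEq κ]

lemma missingProd_bot (b : κ → ι) (c : κ → R) (k : κ) (x : ι → R) :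
    missingProd b c ⊥ x = (x (b k) - c k) * missingProd b c (unitProfile k) x := by
  have hmissing : univ.filter (fun l => unitProfile k l = false) = univ.erase k := by
    ext l
    simp [unitProfile]
  have hall : univ.filter (fun l => (⊥ : κ → Bool) l = false) = univ :=
    Finset.filter_true_of_mem fun _ _ => rfl
  rw [missingProd, missingProd, hmissing, hall]
  exact (Finset.mul_prod_erase univ _ (mem_univ k)).symm

lemma SameMoments.mul_missingProd_eq_of_forall_ne {θ θb : ι → (κ → Bool) → R}
    {p pb : (κ → Bool) → R} (hm : SameMoments θ p θb pb) {b : κ → ι}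
    (hb : Function.Injective b) (c : κ → R) (α : κ → Bool) {F : (ι → R) → R}
    (hF : F ∈ multiAffine R (b '' {k | α k = false})ᶜ)
    (hne : ∀ β ≠ α, p β * (F (θ · β) * missingProd b c α (θ · β)) =
      pb β * (F (θb · β) * missingProd b c α (θb · β))) :
    p α * (F (θ · α) * missingProd b c α (θ · α)) =
      pb α * (F (θb · α) * missingProd b c α (θb · α)) := by
  have hmem := mul_mem_multiAffine disjoint_compl_left hF (missingProd_mem_multiAffine hb c α)
  exact eq_of_sum_eq_sum_of_forall_ne (hm _ (multiAffine_mono (Set.subset_univ _) hmem)) α hne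

end MissingProd

section Anchor

variable {ι κ R : Type*} [Preorder R]

/-- The family of items `a` measures the attributes one by one: the parameter of `a k` attains its
top value exactly at the profiles possessing attribute `k`, as restrictions (R1) and (R2) demand of
items with `q_{a k} = e_k`. -/
structure IsAnchor (θ : ι → (κ → Bool) → R) (a : κ → ι) : Prop where
  eq_top : ∀ k α, α k = true → θ (a k) α = θ (a k) ⊤
  lt_top : ∀ k α, α k = false → θ (a k) α < θ (a k) ⊤

namespace IsAnchor

variable {θ θb : ι → (κ → Bool) → R} {p pb : (κ → Bool) → R} {a b : κ → ι}

lemma le_top (ha : IsAnchor θ a) (k : κ) (α : κ → Bool) : θ (a k) α ≤ θ (a k) ⊤ := by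
  cases hk : α k
  · exact (ha.lt_top k α hk).le
  · exact (ha.eq_top k α hk).le

lemma eq_of_apply_eq (ha : IsAnchor θ a) (hb : IsAnchor θ b) {k l : κ} (h : a k = b l) :
    k = l := by
  classical
  by_contra hkl
  have hk := ha.eq_top k (unitProfile k) (by simp [unitProfile])
  have hl := hb.lt_top l (unitProfile k) (by simpa [unitProfile] using Ne.symm hkl)
  exact hl.ne (h ▸ hk)

lemma injective (ha : IsAnchor θ a) : Function.Injective a := fun _ _ h => ha.eq_of_apply_eq ha h

lemma disjoint_range (ha : IsAnchor θ a) (hb : IsAnchor θ b) (hab : ∀ k, a k ≠ b k) :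
    Disjoint (Set.range a) (Set.range b) := by
  rw [Set.disjoint_left]
  rintro _ ⟨k, rfl⟩ ⟨l, hl⟩
  obtain rfl := ha.eq_of_apply_eq hb hl.symm
  exact hab k hl.symm

variable [Fintype κ] [CommRing R]

lemma missingProd_eq_zero (hb : IsAnchor θ b) {α β : κ → Bool} (h : ¬ β ≤ α) :
    missingProd b (fun k => θ (b k) ⊤) α (θ · β) = 0 := by
  obtain ⟨k, hk⟩ : ∃ k, ¬ β k ≤ α k := by simpa [Pi.le_def] using h
  obtain ⟨hβk, hαk⟩ : β k = true ∧ α k = false := by simpa [Bool.le_iff_imp] using hk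
  exact Finset.prod_eq_zero (i := k) (by simpa using hαk) (sub_eq_zero.2 (hb.eq_top k β hβk))

lemma sub_bot_mul_missingProd_eq_zero (ha : IsAnchor θ a) (j : ι) (β : κ → Bool) :
    (θ j β - θ j ⊥) * missingProd a (fun k => θ (a k) ⊤) ⊥ (θ · β) = 0 := by
  by_cases hβ : β ≤ ⊥
  · rw [le_bot_iff.1 hβ, sub_self, zero_mul]
  · rw [ha.missingProd_eq_zero hβ, mul_zero]

lemma mul_missingProd_eq_of_forall_lt [DecidableEq κ] (hb : IsAnchor θ b)
    (hb_bar : IsAnchor θb b) (hm : SameMoments θ p θb pb) (htop : ∀ k, θ (b k) ⊤ = θb (b k) ⊤)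
    {α : κ → Bool} (hlt : ∀ β < α, (θ · β) = (θb · β) ∧ p β = pb β) {F : (ι → R) → R}
    (hF : F ∈ multiAffine R (b '' {k | α k = false})ᶜ) :
    p α * (F (θ · α) * missingProd b (fun k => θ (b k) ⊤) α (θ · α)) =
      pb α * (F (θb · α) * missingProd b (fun k => θ (b k) ⊤) α (θb · α)) := by
  refine hm.mul_missingProd_eq_of_forall_ne hb.injective _ α hF fun β hβ => ?_
  by_cases hle : β ≤ α
  · obtain ⟨hθ, hp⟩ := hlt β (lt_of_le_of_ne hle hβ)
    rw [hθ, hp]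
  · have hzero : missingProd b (fun k => θ (b k) ⊤) α (θb · β) = 0 := by
      simpa only [htop] using hb_bar.missingProd_eq_zero hle
    rw [hb.missingProd_eq_zero hle, hzero]
    simp only [mul_zero]

variable [IsDomain R]

lemma missingProd_ne_zero (hb : IsAnchor θ b) {c : κ → R} (hc : ∀ k, θ (b k) ⊤ ≤ c k)
    (α : κ → Bool) : missingProd b c α (θ · α) ≠ 0 :=
  Finset.prod_ne_zero_iff.2 fun k hk =>
    sub_ne_zero.2 ((hb.lt_top k α (by simpa using hk)).trans_le (hc k)).ne

variable [DecidableEq κ]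

lemma vanishing_transfer (hb : IsAnchor θb b) (hpb : ∀ α, pb α ≠ 0)
    (hm : SameMoments θ p θb pb) {F : (ι → R) → R} (hF : F ∈ multiAffine R (Set.range b)ᶜ)
    (hzero : ∀ α, F (θ · α) = 0) (α : κ → Bool) : F (θb · α) = 0 := by
  induction α using WellFoundedLT.induction with
  | _ α ih =>
  have hF' : F ∈ multiAffine R (b '' {k | α k = false})ᶜ :=
    multiAffine_mono (Set.compl_subset_compl.2 (Set.image_subset_range _ _)) hF
  have hterm := hm.mul_missingProd_eq_of_forall_ne hb.injective (fun k => θb (b k) ⊤) α hF' ?_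
  · simpa [hzero, hpb α, hb.missingProd_ne_zero (fun _ => le_rfl) α] using hterm.symm
  · intro β hβ
    by_cases hle : β ≤ α
    · simp [hzero, ih β (lt_of_le_of_ne hle hβ)]
    · simp [hzero, hb.missingProd_eq_zero hle]

lemma param_eq_of_forall_lt (hb : IsAnchor θ b) (hb_bar : IsAnchor θb b)
    (hp : ∀ α, p α ≠ 0) (hm : SameMoments θ p θb pb) (htop : ∀ k, θ (b k) ⊤ = θb (b k) ⊤)
    {α : κ → Bool} (hlt : ∀ β < α, (θ · β) = (θb · β) ∧ p β = pb β) {j : ι}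
    (hj : j ∉ Set.range b) : θ j α = θb j α := by
  have hj' : j ∈ (b '' {k | α k = false})ᶜ := fun h => hj (Set.image_subset_range _ _ h)
  have hone := hb.mul_missingProd_eq_of_forall_lt hb_bar hm htop hlt (one_mem_multiAffine _)
  have heval := hb.mul_missingProd_eq_of_forall_lt hb_bar hm htop hlt (eval_mem_multiAffine hj')
  simp only [Pi.one_apply, one_mul] at hone
  rw [mul_left_comm, mul_left_comm (pb α), ← hone] at heval
  exact mul_right_cancel₀ (mul_ne_zero (hp α) (hb.missingProd_ne_zero (fun _ => le_rfl) α)) heval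

lemma weight_eq_of_forall_lt (hb : IsAnchor θ b) (hb_bar : IsAnchor θb b)
    (hm : SameMoments θ p θb pb) (htop : ∀ k, θ (b k) ⊤ = θb (b k) ⊤) {α : κ → Bool}
    (hlt : ∀ β < α, (θ · β) = (θb · β) ∧ p β = pb β) (hα : (θ · α) = (θb · α)) :
    p α = pb α := by
  have hone := hb.mul_missingProd_eq_of_forall_lt hb_bar hm htop hlt (one_mem_multiAffine _)
  rw [← hα] at hone
  simp only [Pi.one_apply, one_mul] at hone
  exact mul_right_cancel₀ (hb.missingProd_ne_zero (fun _ => le_rfl) α) hone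

end IsAnchor

end Anchor

section Identification

variable {ι κ R : Type*} [Fintype κ] [DecidableEq κ] [CommRing R] [IsDomain R] [LinearOrder R]
  {θ θb : ι → (κ → Bool) → R} {p pb : (κ → Bool) → R} {a b : κ → ι}

lemma anchor_top_le (hm : SameMoments θ p θb pb) (hp : ∀ α, p α ≠ 0) (hpb : ∀ α, pb α ≠ 0)
    (ha : IsAnchor θ a) (ha_bar : IsAnchor θb a) (hb : IsAnchor θ b) (hb_bar : IsAnchor θb b)
    (hne : ∀ k, a k ≠ b k) {k : κ}
    (hsep : ∃ j ∉ Set.range a ∪ Set.range b, θ j (unitProfile k) ≠ θ j ⊥) :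
    θ (a k) ⊤ ≤ θb (a k) ⊤ := by
  by_contra! hlt
  obtain ⟨j, hj, hjk⟩ := hsep
  have hmem := sub_const_mul_missingProd_mem_multiAffine ha.injective
    (ha.disjoint_range hb hne) hj (θ j ⊥) (fun l => θ (a l) ⊤)
  have hrel_bot : ∀ β,
      (θb j β - θ j ⊥) * missingProd a (fun l => θ (a l) ⊤) ⊥ (θb · β) = 0 :=
    hb_bar.vanishing_transfer hpb hm (hmem ⊥) (ha.sub_bot_mul_missingProd_eq_zero j)
  -- The factor of attribute `k` never vanishes on the second pair, so it can be dropped.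
  have hrel_unit : ∀ β,
      (θb j β - θ j ⊥) * missingProd a (fun l => θ (a l) ⊤) (unitProfile k) (θb · β) = 0 := by
    intro β
    have hk : θb (a k) β - θ (a k) ⊤ ≠ 0 := sub_ne_zero.2 ((ha_bar.le_top k β).trans_lt hlt).ne
    have hβ := hrel_bot β
    rw [missingProd_bot a _ k, mul_left_comm] at hβ
    exact (mul_eq_zero.1 hβ).resolve_left hk
  have hzero := hb.vanishing_transfer hp hm.symm (hmem (unitProfile k)) hrel_unit (unitProfile k)
  exact mul_ne_zero (sub_ne_zero.2 hjk) (ha.missingProd_ne_zero (fun _ => le_rfl) _) hzero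

lemma anchor_top_eq (hm : SameMoments θ p θb pb) (hp : ∀ α, p α ≠ 0) (hpb : ∀ α, pb α ≠ 0)
    (ha : IsAnchor θ a) (ha_bar : IsAnchor θb a) (hb : IsAnchor θ b) (hb_bar : IsAnchor θb b)
    (hne : ∀ k, a k ≠ b k)
    (hsep : ∀ k, ∃ j ∉ Set.range a ∪ Set.range b, θ j (unitProfile k) ≠ θ j ⊥) (k : κ) :
    θ (a k) ⊤ = θb (a k) ⊤ := by
  have hle : ∀ l, θ (a l) ⊤ ≤ θb (a l) ⊤ := fun l =>
    anchor_top_le hm hp hpb ha ha_bar hb hb_bar hne (hsep l)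
  obtain ⟨j, hj, hjk⟩ := hsep k
  have hrel : ∀ β, (θ j β - θb j ⊥) * missingProd a (fun l => θb (a l) ⊤) ⊥ (θ · β) = 0 :=
    hb.vanishing_transfer hp hm.symm
      (sub_const_mul_missingProd_mem_multiAffine ha.injective (ha.disjoint_range hb hne) hj _ _ _)
      (ha_bar.sub_bot_mul_missingProd_eq_zero j)
  have hbot : θ j ⊥ = θb j ⊥ :=
    sub_eq_zero.1 ((mul_eq_zero.1 (hrel ⊥)).resolve_right (ha.missingProd_ne_zero hle ⊥))
  have hunit := hrel (unitProfile k)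
  rw [← hbot, missingProd_bot a _ k, ha.eq_top k _ (by simp [unitProfile])] at hunit
  have hfactor := (mul_eq_zero.1 hunit).resolve_left (sub_ne_zero.2 hjk)
  exact sub_eq_zero.1 ((mul_eq_zero.1 hfactor).resolve_right (ha.missingProd_ne_zero hle _))

theorem identifiability_of_restricted_latent_class_models_general [Fintype ι]
    (ha : IsAnchor θ a) (ha_bar : IsAnchor θb a) (hb : IsAnchor θ b) (hb_bar : IsAnchor θb b)
    (hne : ∀ k, a k ≠ b k)
    (hsep : ∀ k, ∃ j ∉ Set.range a ∪ Set.range b, θ j (unitProfile k) ≠ θ j ⊥)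
    (hp : ∀ α, p α ≠ 0) (hpb : ∀ α, pb α ≠ 0)
    (heq : ∀ r : ι → Bool,
      mixtureMean θ p (responseLikelihood r) = mixtureMean θb pb (responseLikelihood r)) :
    θ = θb ∧ p = pb := by
  have hm := sameMoments_of_responseLikelihood heq
  have htop_a := anchor_top_eq hm hp hpb ha ha_bar hb hb_bar hne hsep
  have htop_b := anchor_top_eq hm hp hpb hb hb_bar ha ha_bar (fun k => (hne k).symm)
    (by simpa only [Set.union_comm] using hsep)
  have hall : ∀ α, (θ · α) = (θb · α) ∧ p α = pb α := by
    intro α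
    induction α using WellFoundedLT.induction with
    | _ α ih =>
    have hα : (θ · α) = (θb · α) := by
      ext j
      by_cases hj : j ∈ Set.range a
      · exact hb.param_eq_of_forall_lt hb_bar hp hm htop_b ih
          (Set.disjoint_left.1 (ha.disjoint_range hb hne) hj)
      · exact ha.param_eq_of_forall_lt ha_bar hp hm htop_a ih hj
    exact ⟨hα, hb.weight_eq_of_forall_lt hb_bar hm htop_b ih hα⟩
  exact ⟨funext₂ fun j α => congrFun (hall α).1 j, funext fun α => (hall α).2⟩

end Identification

section IdentityCopies

variable {J K : ℕ} (hJ : 2 * K ≤ J)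

/-- The index of the row `e_k` in the first identity block of the Q-matrix. -/
def firstCopy (k : Fin K) : Fin J := ⟨k, by omega⟩

/-- The index of the row `e_k` in the second identity block of the Q-matrix. -/
def secondCopy (k : Fin K) : Fin J := ⟨K + k, by omega⟩

lemma firstCopy_ne_secondCopy (k : Fin K) : firstCopy hJ k ≠ secondCopy hJ k := by
  simp only [firstCopy, secondCopy, ne_eq, Fin.mk.injEq]
  omega

lemma isAnchor_of_row_eq_basis {Q : Fin J → Fin K → Bool} {θ : Fin J → (Fin K → Bool) → ℝ}
    (hR1 : R1 Q θ) (hR2 : R2 Q θ) {a : Fin K → Fin J} (ha : ∀ k, Q (a k) = basis k) :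
    IsAnchor θ a where
  eq_top k α hk := by
    refine (hR1 (a k)).1 α ⊤ (fun i hi => ?_) (fun _ _ => rfl)
    obtain rfl : i = k := by simpa [ha k, basis] using hi
    exact hk
  lt_top k α hk := hR2 k (a k) (ha k) α hk

lemma C1.isAnchor_firstCopy {Q : Fin J → Fin K → Bool} (hC1 : C1 Q)
    {θ : Fin J → (Fin K → Bool) → ℝ} (hR1 : R1 Q θ) (hR2 : R2 Q θ) :
    IsAnchor θ (firstCopy hJ) :=
  isAnchor_of_row_eq_basis hR1 hR2 fun k => (hC1 k _ (by omega)).1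

lemma C1.isAnchor_secondCopy {Q : Fin J → Fin K → Bool} (hC1 : C1 Q)
    {θ : Fin J → (Fin K → Bool) → ℝ} (hR1 : R1 Q θ) (hR2 : R2 Q θ) :
    IsAnchor θ (secondCopy hJ) :=
  isAnchor_of_row_eq_basis hR1 hR2 fun k => (hC1 k (by omega) _).2

lemma C2.exists_notMem_range_copies {θ : Fin J → (Fin K → Bool) → ℝ} (hC2 : C2 θ) (k : Fin K) :
    ∃ j ∉ Set.range (firstCopy hJ) ∪ Set.range (secondCopy hJ),
      θ j (unitProfile k) ≠ θ j ⊥ := by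
  obtain ⟨j, hj, hjk⟩ := hC2 k
  refine ⟨j, ?_, hjk⟩
  rintro (⟨l, rfl⟩ | ⟨l, rfl⟩) <;> simp only [firstCopy, secondCopy] at hj <;> omega

end IdentityCopies

/-- **Theorem 1.** Under conditions (C1) and (C2), the restricted latent class model
parameters `(Θ, p)` are identifiable. -/
theorem identifiability_of_restricted_latent_class_models
    {J K : ℕ} (hJ : 2 * K ≤ J) (Q : Fin J → Fin K → Bool)
    (θ θb : Fin J → (Fin K → Bool) → ℝ) (p pb : (Fin K → Bool) → ℝ)
    (hθ : ThetaValid θ) (hθb : ThetaValid θb) (hp : PValid p) (hpb : PValid pb)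
    (hR1 : R1 Q θ) (hR1b : R1 Q θb) (hR2 : R2 Q θ) (hR2b : R2 Q θb)
    (hC1 : C1 Q) (hC2 : C2 θ)
    (heq : ∀ r : Fin J → Bool, respProb θ p r = respProb θb pb r) :
    θ = θb ∧ p = pb := by
  exact identifiability_of_restricted_latent_class_models_general
    (hC1.isAnchor_firstCopy hJ hR1 hR2) (hC1.isAnchor_firstCopy hJ hR1b hR2b)
    (hC1.isAnchor_secondCopy hJ hR1 hR2) (hC1.isAnchor_secondCopy hJ hR1b hR2b)
    (firstCopy_ne_secondCopy hJ) (hC2.exists_notMem_range_copies hJ)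
    (fun α => (hp.1 α).1.ne') (fun α => (hpb.1 α).1.ne') heq
end

section
/- (Step 3 of the proof of Theorem 1.) Under the standing hypotheses, for every item j ∈ {1, …, 2K} and every k ∈ {1, …, K}: θ_{j,0} = θ̄_{j,0} and θ_{j,e_k} = θ̄_{j,e_k}; moreover, p_0 = p̄_0 and p_{e_k} = p̄_{e_k} for every k ∈ {1, …, K}. -/
open Finset

/-!
Equality of `T(Q, Θ) p` and `T(Q, Θ̄) p̄` says that all products of distinct items have the same
mean under both models, and this persists after translating the items by constants. Multiplying
the weights `p` by such a product of some items leaves agreeing moments for the remaining ones, so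
products that vanish at all profiles but one localize the comparison.

Write `A`, `B` for the two identity blocks. The products `∏ (A_k - Ā_k(1))` and `∏ (B_k - B_k(1))`
are supported at `0` for the barred and the unbarred model respectively; replacing `B_k(1)` by
`B_k(0)` moves the support of the second one to `e_k`. Comparing the means of their product with
and without an extra item that separates `e_k` from `0` forces `B_k(0) = B̄_k(0)`. The weights
`p ∏ (A_k - Ā_k(1))` then have the same `B`-moments as a multiple of the point mass at `0`, hence
equal it because `B`-moments determine weights, and this gives `A_k(1) = Ā_k(1)`. Once the extreme
values of `B` agree, the localizing products of `B` have the same support in both models, and `A`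
and `p` can be read off at `0` and at `e_k`.
-/

section Moments

variable {ι ι' Ω : Type*} [Fintype Ω]

/-- Two families of items `θ`, `θ'` with (signed) weights `p`, `p'` on the latent classes have the
same moments if every product of distinct items has the same weighted sum. For `ι = Fin J` this is
the hypothesis `T(Q, Θ) p = T(Q, Θ') p'`, with responses encoded by finite sets of items. -/
def MomentsEq (θ : ι → Ω → ℝ) (p : Ω → ℝ) (θ' : ι → Ω → ℝ) (p' : Ω → ℝ) : Prop :=
  ∀ S : Finset ι, ∑ α, p α * ∏ j ∈ S, θ j α = ∑ α, p' α * ∏ j ∈ S, θ' j α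

namespace MomentsEq

variable {θ θ' : ι → Ω → ℝ} {p p' : Ω → ℝ}

theorem symm (h : MomentsEq θ p θ' p') : MomentsEq θ' p' θ p := fun S => (h S).symm

theorem sum_eq (h : MomentsEq θ p θ' p') : ∑ α, p α = ∑ α, p' α := by
  simpa using h ∅

theorem sum_mul_eq (h : MomentsEq θ p θ' p') (j : ι) :
    ∑ α, p α * θ j α = ∑ α, p' α * θ' j α := by
  simpa using h {j}

theorem comp (h : MomentsEq θ p θ' p') {w : ι' → ι} (hw : Function.Injective w) :
    MomentsEq (θ ∘ w) p (θ' ∘ w) p' := fun S => by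
  simpa using h (S.map ⟨w, hw⟩)

theorem sub_const (h : MomentsEq θ p θ' p') (c : ι → ℝ) :
    MomentsEq (fun j α => θ j α - c j) p (fun j α => θ' j α - c j) p' := by
  classical
  intro S
  have expand (η : ι → Ω → ℝ) (q : Ω → ℝ) :
      ∑ α, q α * ∏ j ∈ S, (η j α - c j) =
        ∑ R ∈ S.powerset, (∏ j ∈ S \ R, -c j) * ∑ α, q α * ∏ j ∈ R, η j α := by
    simp only [sub_eq_add_neg, prod_add, mul_sum]
    rw [sum_comm]
    exact sum_congr rfl fun R _ => sum_congr rfl fun α _ => by ring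
  simp only [expand, h _]

theorem mul_prod_sub {A A' : ι → Ω → ℝ} {B B' : ι' → Ω → ℝ}
    (h : MomentsEq (Sum.elim A B) p (Sum.elim A' B') p') (S : Finset ι) (a : ι → ℝ) :
    MomentsEq B (fun α => p α * ∏ i ∈ S, (A i α - a i))
      B' (fun α => p' α * ∏ i ∈ S, (A' i α - a i)) := fun R => by
  simpa [prod_disjSum, mul_assoc] using h.sub_const (Sum.elim a 0) (S.disjSum R)

theorem swap {A A' : ι → Ω → ℝ} {B B' : ι' → Ω → ℝ}
    (h : MomentsEq (Sum.elim A B) p (Sum.elim A' B') p') :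
    MomentsEq (Sum.elim B A) p (Sum.elim B' A') p' := by
  simpa only [Sum.elim_swap] using h.comp Sum.swap_leftInverse.injective

theorem inner_swap {ι'' : Type*} {A A' : ι → Ω → ℝ} {B B' : ι' → Ω → ℝ} {C C' : ι'' → Ω → ℝ}
    (h : MomentsEq (Sum.elim C (Sum.elim A B)) p (Sum.elim C' (Sum.elim A' B')) p') :
    MomentsEq (Sum.elim C (Sum.elim B A)) p (Sum.elim C' (Sum.elim B' A')) p' := by
  simpa only [Sum.elim_comp_map, Sum.elim_swap, Function.comp_id] using
    h.comp (Sum.map_injective.2 ⟨Function.injective_id, Sum.swap_leftInverse.injective⟩)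

theorem inr {A A' : ι → Ω → ℝ} {B B' : ι' → Ω → ℝ}
    (h : MomentsEq (Sum.elim A B) p (Sum.elim A' B') p') : MomentsEq B p B' p' :=
  h.comp Sum.inr_injective

variable {x : Ω}

theorem weight_eq_of_support (h : MomentsEq θ p θ' p') (hp : ∀ α ≠ x, p α = 0)
    (hp' : ∀ α ≠ x, p' α = 0) : p x = p' x := by
  rw [← Fintype.sum_eq_single x hp, ← Fintype.sum_eq_single x hp', h.sum_eq]

theorem apply_eq_of_support (h : MomentsEq θ p θ' p') (hp : ∀ α ≠ x, p α = 0)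
    (hp' : ∀ α ≠ x, p' α = 0) (hpx : p x ≠ 0) (j : ι) : θ j x = θ' j x := by
  refine mul_left_cancel₀ hpx ?_
  calc p x * θ j x = ∑ α, p α * θ j α := by
        rw [Fintype.sum_eq_single x fun α hα => by rw [hp α hα, zero_mul]]
    _ = ∑ α, p' α * θ' j α := h.sum_mul_eq j
    _ = p' x * θ' j x := Fintype.sum_eq_single x fun α hα => by rw [hp' α hα, zero_mul]
    _ = p x * θ' j x := by rw [h.weight_eq_of_support hp hp']

end MomentsEq

end Moments

section IdentityBlock

variable {κ : Type*}

/-- A block of items indexed by the attributes whose rows of the Q-matrix form an identity matrix: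
item `k` takes its largest value exactly at the profiles possessing attribute `k`, and its smallest
value at the zero profile. Profiles carry the componentwise order, so `⊥ = 0` and `⊤ = 1`. -/
structure IsIdentityBlock (A : κ → (κ → Bool) → ℝ) : Prop where
  eq_top : ∀ k α, α k = true → A k α = A k ⊤
  lt_top : ∀ k α, α k = false → A k α < A k ⊤
  bot_le : ∀ k α, A k ⊥ ≤ A k α

/-- Subtracting `pivot A x k` from item `k` of an identity block, for all `k`, and multiplying gives
a function of the profile supported at `x`, provided `x` has at most one attribute. -/
def pivot (A : κ → (κ → Bool) → ℝ) (x : κ → Bool) (k : κ) : ℝ :=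
  if x k = true then A k ⊥ else A k ⊤

theorem subsingleton_setOf_decide_eq [DecidableEq κ] (k : κ) :
    {m | decide (m = k) = true}.Subsingleton := by
  simp only [decide_eq_true_eq, Set.ofPred_eq_eq_singleton, Set.subsingleton_singleton]

theorem pivot_congr {A A' : κ → (κ → Bool) → ℝ} (hbot : ∀ k, A k ⊥ = A' k ⊥)
    (htop : ∀ k, A k ⊤ = A' k ⊤) (x : κ → Bool) : pivot A x = pivot A' x :=
  funext fun k => by simp only [pivot, hbot, htop]

namespace IsIdentityBlock

variable {A A' B B' : κ → (κ → Bool) → ℝ} {x : κ → Bool}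

theorem le_top (hA : IsIdentityBlock A) (k : κ) (α : κ → Bool) : A k α ≤ A k ⊤ := by
  cases hα : α k
  · exact (hA.lt_top k α hα).le
  · exact (hA.eq_top k α hα).le

theorem bot_lt_top (hA : IsIdentityBlock A) (k : κ) : A k ⊥ < A k ⊤ := hA.lt_top k ⊥ rfl

variable [Fintype κ]

theorem prod_sub_pivot_eq_zero (hA : IsIdentityBlock A) (hx : {k | x k = true}.Subsingleton)
    {α : κ → Bool} (hα : α ≠ x) : ∏ k, (A k α - pivot A x k) = 0 := by
  by_cases hle : α ≤ x
  · obtain ⟨-, k, hk⟩ := Pi.lt_def.1 (lt_of_le_of_ne hle hα)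
    obtain ⟨hαk, hxk⟩ := Bool.lt_iff.1 hk
    have hα_bot : α = ⊥ := funext fun m => by
      by_contra hm
      have hαm : α m = true := by simpa using hm
      rw [hx (hle m hαm) hxk, hαk] at hαm
      exact Bool.false_ne_true hαm
    exact prod_eq_zero (mem_univ k) (by simp [pivot, hxk, hα_bot])
  · obtain ⟨k, hk⟩ := not_forall.1 hle
    obtain ⟨hxk, hαk⟩ := Bool.lt_iff.1 (not_le.1 hk)
    exact prod_eq_zero (mem_univ k) (by simp [pivot, hxk, hA.eq_top k α hαk])

theorem prod_sub_pivot_ne_zero (hA : IsIdentityBlock A) (x : κ → Bool) :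
    ∏ k, (A k x - pivot A x k) ≠ 0 := by
  refine prod_ne_zero_iff.2 fun k _ => sub_ne_zero.2 ?_
  cases hxk : x k
  · simpa [pivot, hxk] using (hA.lt_top k x hxk).ne
  · simpa [pivot, hxk, hA.eq_top k x hxk] using (hA.bot_lt_top k).ne'

variable [DecidableEq κ] {p p' : (κ → Bool) → ℝ}

-- The product of the items `B k - B k ⊤` over the attributes missing from `α` vanishes at every
-- profile not below `α`, so the moment equations are triangular for the order of profiles.
theorem weight_eq (hB : IsIdentityBlock B) (h : MomentsEq B p B p') : p = p' := by
  funext α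
  induction α using WellFoundedLT.induction with
  | ind α ih =>
    let S : Finset κ := {k | α k = false}
    have hsum : ∑ β, (p β - p' β) * ∏ k ∈ S, (B k β - B k ⊤) = 0 := by
      simp only [sub_mul, sum_sub_distrib]
      exact sub_eq_zero.2 (h.sub_const (fun k => B k ⊤) S)
    rw [Fintype.sum_eq_single α] at hsum
    · refine sub_eq_zero.1 ((mul_eq_zero.1 hsum).resolve_right ?_)
      exact prod_ne_zero_iff.2 fun k hk =>
        sub_ne_zero.2 (hB.lt_top k α (by simpa [S] using hk)).ne
    · intro β hβ
      by_cases hle : β ≤ α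
      · rw [ih β (lt_of_le_of_ne hle hβ), sub_self, zero_mul]
      · obtain ⟨k, hk⟩ := not_forall.1 hle
        obtain ⟨hαk, hβk⟩ := Bool.lt_iff.1 (not_le.1 hk)
        rw [prod_eq_zero (i := k) (by simpa [S] using hαk) (by rw [hB.eq_top k β hβk, sub_self]),
          mul_zero]

theorem bot_lt_top_of_momentsEq (hA : IsIdentityBlock A) (hA' : IsIdentityBlock A')
    (h : MomentsEq A p A' p') (hp : ∀ α, 0 < p α) (hp' : ∀ α, 0 < p' α) (k : κ) :
    A k ⊥ < A' k ⊤ := by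
  have hmean : (∑ α, p α) * A k ⊥ < (∑ α, p α) * A' k ⊤ :=
    calc (∑ α, p α) * A k ⊥ = ∑ α, p α * A k ⊥ := sum_mul ..
      _ < ∑ α, p α * A k α :=
        sum_lt_sum (fun α _ => mul_le_mul_of_nonneg_left (hA.bot_le k α) (hp α).le)
          ⟨⊤, mem_univ _, mul_lt_mul_of_pos_left (hA.bot_lt_top k) (hp ⊤)⟩
      _ = ∑ α, p' α * A' k α := h.sum_mul_eq k
      _ ≤ ∑ α, p' α * A' k ⊤ :=
        sum_le_sum fun α _ => mul_le_mul_of_nonneg_left (hA'.le_top k α) (hp' α).le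
      _ = (∑ α, p α) * A' k ⊤ := by rw [← sum_mul, h.sum_eq]
  exact lt_of_mul_lt_mul_left hmean (sum_nonneg fun α _ => (hp α).le)

theorem weight_mul_prod_sub_pivot_eq (hB : IsIdentityBlock B) (hA' : IsIdentityBlock A')
    (h : MomentsEq (Sum.elim A B) p (Sum.elim A' B') p') (hx : {k | x k = true}.Subsingleton) :
    p x * (∏ k, (A k x - pivot A' ⊥ k)) * ∏ k, (B k x - pivot B x k) =
      p' ⊥ * (∏ k, (A' k ⊥ - pivot A' ⊥ k)) * ∏ k, (B' k ⊥ - pivot B x k) := by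
  have hsum := (h.mul_prod_sub univ (pivot A' ⊥)).sub_const (pivot B x) univ
  rwa [Fintype.sum_eq_single x fun α hα => by rw [hB.prod_sub_pivot_eq_zero hx hα, mul_zero],
    Fintype.sum_eq_single ⊥ fun α hα => by
      rw [hA'.prod_sub_pivot_eq_zero (by simp) hα, mul_zero, zero_mul]] at hsum

variable {d d' : (κ → Bool) → ℝ}

theorem deviation_bot_eq_zero (hB : IsIdentityBlock B) (hA' : IsIdentityBlock A')
    (hB' : IsIdentityBlock B') (h : MomentsEq B p B' p')
    (hd : MomentsEq (Sum.elim A B) (fun α => p α * d α) (Sum.elim A' B') fun α => p' α * d' α)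
    (hp : ∀ α, 0 < p α) (hp' : ∀ α, 0 < p' α) (hd_bot : d ⊥ = 0) : d' ⊥ = 0 := by
  have hB_ne : ∏ k, (B' k ⊥ - pivot B ⊥ k) ≠ 0 := prod_ne_zero_iff.2 fun k _ =>
    sub_ne_zero.2 (hB'.bot_lt_top_of_momentsEq hB h.symm hp' hp k).ne
  have htransfer := hB.weight_mul_prod_sub_pivot_eq hA' hd (x := ⊥) (by simp)
  simpa [hd_bot, hB_ne, hA'.prod_sub_pivot_ne_zero, (hp' ⊥).ne'] using htransfer.symm

theorem bot_eq_of_deviation_ne_zero (hB : IsIdentityBlock B) (hA' : IsIdentityBlock A')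
    (hB' : IsIdentityBlock B') (h : MomentsEq (Sum.elim A B) p (Sum.elim A' B') p')
    (hd : MomentsEq (Sum.elim A B) (fun α => p α * d α) (Sum.elim A' B') fun α => p' α * d' α)
    (hp : ∀ α, 0 < p α) (hp' : ∀ α, 0 < p' α) (hd_bot : d ⊥ = 0)
    (hx : {k | x k = true}.Subsingleton) (hdx : d x ≠ 0) {k : κ} (hxk : x k = true) :
    B k ⊥ = B' k ⊥ := by
  have hA_prod : ∏ k, (A k x - pivot A' ⊥ k) = 0 := by
    have htransfer := hB.weight_mul_prod_sub_pivot_eq hA' hd hx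
    simpa [hB.deviation_bot_eq_zero hA' hB' h.inr hd hp hp' hd_bot, hdx, (hp x).ne',
      hB.prod_sub_pivot_ne_zero x] using htransfer
  have hB_prod : ∏ k, (B' k ⊥ - pivot B x k) = 0 := by
    have htransfer := (hB.weight_mul_prod_sub_pivot_eq hA' h hx).symm
    simpa only [hA_prod, mul_zero, zero_mul, mul_eq_zero, (hp' ⊥).ne',
      hA'.prod_sub_pivot_ne_zero ⊥, false_or] using htransfer
  obtain ⟨m, -, hm⟩ := prod_eq_zero_iff.1 hB_prod
  have hlt := hB'.bot_lt_top_of_momentsEq hB h.inr.symm hp' hp m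
  cases hxm : x m
  · simp only [pivot, hxm, Bool.false_eq_true, if_false] at hm
    exact absurd (sub_eq_zero.1 hm) hlt.ne
  · obtain rfl : m = k := hx hxm hxk
    simp only [pivot, hxm, if_true] at hm
    exact (sub_eq_zero.1 hm).symm

theorem prod_sub_top_eq_zero (hB : IsIdentityBlock B) (hA' : IsIdentityBlock A')
    (h : MomentsEq (Sum.elim A B) p (Sum.elim A' B') p') (hp : ∀ α, 0 < p α)
    (hbot : ∀ k, B k ⊥ = B' k ⊥) {α : κ → Bool} (hα : α ≠ ⊥) :
    ∏ k, (A k α - A' k ⊤) = 0 := by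
  let q (β : κ → Bool) : ℝ := p β * ∏ k, (A k β - pivot A' ⊥ k)
  let c : ℝ := p' ⊥ * ∏ k, (A' k ⊥ - pivot A' ⊥ k)
  have hq : MomentsEq B q B (Pi.single ⊥ c) := fun S => by
    rw [h.mul_prod_sub univ (pivot A' ⊥) S, Fintype.sum_eq_single ⊥, Fintype.sum_eq_single ⊥]
    · simp [c, hbot]
    · intro β hβ
      simp [hβ]
    · intro β hβ
      simp [hA'.prod_sub_pivot_eq_zero (by simp) hβ]
  have hqα : q α = 0 := by rw [hB.weight_eq hq, Pi.single_eq_of_ne hα]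
  exact (mul_eq_zero.1 hqα).resolve_left (hp α).ne'

theorem top_eq (hA : IsIdentityBlock A) (hB : IsIdentityBlock B) (hA' : IsIdentityBlock A')
    (h : MomentsEq (Sum.elim A B) p (Sum.elim A' B') p') (hp : ∀ α, 0 < p α)
    (hbot : ∀ k, B k ⊥ = B' k ⊥) (k : κ) : A k ⊤ = A' k ⊤ := by
  by_contra hk
  let α : κ → Bool := fun m => decide (A m ⊤ ≠ A' m ⊤)
  have hα : α ≠ ⊥ := fun h_bot => by simpa [α, hk] using congrFun h_bot k
  obtain ⟨m, -, hm⟩ := prod_eq_zero_iff.1 (hB.prod_sub_top_eq_zero hA' h hp hbot hα)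
  have hm_eq : A m α = A' m ⊤ := sub_eq_zero.1 hm
  by_cases hm_top : A m ⊤ = A' m ⊤
  · exact (hA.lt_top m α (by simp [α, hm_top])).ne (hm_eq.trans hm_top.symm)
  · exact hm_top ((hA.eq_top m α (by simp [α, hm_top])).symm.trans hm_eq)

theorem weight_apply_eq_of_pivot_eq (hB : IsIdentityBlock B) (hB' : IsIdentityBlock B')
    (h : MomentsEq B p B' p') (hpivot : pivot B x = pivot B' x)
    (hx : {k | x k = true}.Subsingleton) (hBx : ∀ k, B k x = B' k x) : p x = p' x := by
  have hsum := h.sub_const (pivot B x) univ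
  rw [Fintype.sum_eq_single x fun α hα => by rw [hB.prod_sub_pivot_eq_zero hx hα, mul_zero],
    Fintype.sum_eq_single x fun α hα => by
      rw [hpivot, hB'.prod_sub_pivot_eq_zero hx hα, mul_zero]] at hsum
  simp only [← hBx] at hsum
  exact mul_right_cancel₀ (hB.prod_sub_pivot_ne_zero x) hsum

variable {ι : Type*} {C C' : ι → (κ → Bool) → ℝ}

theorem apply_eq_of_pivot_eq (hB : IsIdentityBlock B) (hB' : IsIdentityBlock B')
    (h : MomentsEq (Sum.elim B C) p (Sum.elim B' C') p') (hp : ∀ α, 0 < p α)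
    (hpivot : pivot B x = pivot B' x) (hx : {k | x k = true}.Subsingleton) (i : ι) :
    C i x = C' i x := by
  refine (h.mul_prod_sub univ (pivot B x)).apply_eq_of_support (x := x) ?_ ?_ ?_ i
  · intro α hα
    rw [hB.prod_sub_pivot_eq_zero hx hα, mul_zero]
  · intro α hα
    rw [hpivot, hB'.prod_sub_pivot_eq_zero hx hα, mul_zero]
  · exact mul_ne_zero (hp x).ne' (hB.prod_sub_pivot_ne_zero x)

theorem bot_eq (hB : IsIdentityBlock B) (hA' : IsIdentityBlock A') (hB' : IsIdentityBlock B')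
    (h : MomentsEq (Sum.elim C (Sum.elim A B)) p (Sum.elim C' (Sum.elim A' B')) p')
    (hp : ∀ α, 0 < p α) (hp' : ∀ α, 0 < p' α)
    (hC : ∀ k, ∃ i, C i (fun m => decide (m = k)) ≠ C i ⊥) (k : κ) : B k ⊥ = B' k ⊥ := by
  obtain ⟨i, hi⟩ := hC k
  have hd := h.mul_prod_sub {i} fun _ => C i ⊥
  simp only [prod_singleton] at hd
  exact hB.bot_eq_of_deviation_ne_zero hA' hB' h.inr hd hp hp' (sub_self _)
    (x := fun m => decide (m = k)) (subsingleton_setOf_decide_eq k)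
    (sub_ne_zero.2 hi) (decide_eq_true rfl)

theorem apply_eq_and_weight_eq (hA : IsIdentityBlock A) (hB : IsIdentityBlock B)
    (hA' : IsIdentityBlock A') (hB' : IsIdentityBlock B')
    (h : MomentsEq (Sum.elim C (Sum.elim A B)) p (Sum.elim C' (Sum.elim A' B')) p')
    (hp : ∀ α, 0 < p α) (hp' : ∀ α, 0 < p' α)
    (hC : ∀ k, ∃ i, C i (fun m => decide (m = k)) ≠ C i ⊥) (hx : {k | x k = true}.Subsingleton) :
    (∀ k, A k x = A' k x) ∧ (∀ k, B k x = B' k x) ∧ p x = p' x := by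
  have hA_bot := hA.bot_eq hB' hA' h.inner_swap hp hp' hC
  have hB_bot := hB.bot_eq hA' hB' h hp hp' hC
  have hA_top := hA.top_eq hB hA' h.inr hp hB_bot
  have hB_top := hB.top_eq hA hB' h.inr.swap hp hA_bot
  have hA_pivot := pivot_congr hA_bot hA_top x
  have hB_pivot := pivot_congr hB_bot hB_top x
  have hBx := hA.apply_eq_of_pivot_eq hA' h.inr hp hA_pivot hx
  exact ⟨hB.apply_eq_of_pivot_eq hB' h.inr.swap hp hB_pivot hx, hBx,
    hB.weight_apply_eq_of_pivot_eq hB' h.inr.inr hB_pivot hx hBx⟩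

end IsIdentityBlock

end IdentityBlock

section Model

variable {J K : ℕ}

theorem momentsEq_of_Tp_eq {θ θ' : Fin J → (Fin K → Bool) → ℝ} {p p' : (Fin K → Bool) → ℝ}
    (hT : ∀ r, Tp θ p r = Tp θ' p' r) : MomentsEq θ p θ' p' := fun S => by
  simpa [Tp, tEntry, prod_ite_mem, mul_comm] using hT fun j => decide (j ∈ S)

theorem isIdentityBlock_of_R1_of_R2 {Q : Fin J → Fin K → Bool} {θ : Fin J → (Fin K → Bool) → ℝ}
    (hR1 : R1 Q θ) (hR2 : R2 Q θ) {u : Fin K → Fin J} (hu : ∀ k, Q (u k) = basis k) :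
    IsIdentityBlock (θ ∘ u) where
  eq_top k α hα := by
    refine (hR1 (u k)).1 α ⊤ (fun i hi => ?_) fun i _ => rfl
    obtain rfl : i = k := by simpa [hu, basis] using hi
    exact hα
  lt_top k := hR2 k (u k) (hu k)
  bot_le k := (hR1 (u k)).2.2

/-- The item carrying attribute `k` in the first identity block. -/
def firstItem (hJ : 2 * K ≤ J) (k : Fin K) : Fin J := ⟨k, by omega⟩

/-- The item carrying attribute `k` in the second identity block. -/
def secondItem (hJ : 2 * K ≤ J) (k : Fin K) : Fin J := ⟨K + k, by omega⟩

theorem exists_eq_firstItem_or_secondItem (hJ : 2 * K ≤ J) {j : Fin J} (hj : (j : ℕ) < 2 * K) :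
    ∃ k, j = firstItem hJ k ∨ j = secondItem hJ k := by
  rcases lt_or_ge (j : ℕ) K with hjK | hjK
  · exact ⟨⟨j, hjK⟩, Or.inl rfl⟩
  · exact ⟨⟨j - K, by omega⟩, Or.inr (Fin.ext (show (j : ℕ) = K + (j - K) by omega))⟩

theorem blocks_injective (hJ : 2 * K ≤ J) : Function.Injective
    (Sum.elim (Subtype.val : {j : Fin J // 2 * K ≤ (j : ℕ)} → Fin J)
      (Sum.elim (firstItem hJ) (secondItem hJ))) := by
  rintro (⟨i, hi⟩ | i | i) (⟨j, hj⟩ | j | j) hij <;>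
    grind [firstItem, secondItem]

end Model

theorem step3_first_items_and_p_eq_general
    {J K : ℕ} (hJ : 2 * K ≤ J) {Q : Fin J → Fin K → Bool}
    {θ θb : Fin J → (Fin K → Bool) → ℝ} {p pb : (Fin K → Bool) → ℝ}
    (hp : ∀ α, 0 < p α) (hpb : ∀ α, 0 < pb α)
    (hR1 : R1 Q θ) (hR1b : R1 Q θb) (hR2 : R2 Q θ) (hR2b : R2 Q θb)
    (hC1 : C1 Q) (hC2 : C2 θ) (hT : ∀ r, Tp θ p r = Tp θb pb r) :
    (∀ j : Fin J, (j : ℕ) < 2 * K →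
      θ j (allZero K) = θb j (allZero K) ∧
      ∀ k : Fin K, θ j (basis k) = θb j (basis k)) ∧
    p (allZero K) = pb (allZero K) ∧
    (∀ k : Fin K, p (basis k) = pb (basis k)) := by
  have hu (k) : Q (firstItem hJ k) = basis k := (hC1 k (by omega) (by omega)).1
  have hv (k) : Q (secondItem hJ k) = basis k := (hC1 k (by omega) (by omega)).2
  have hblocks := (momentsEq_of_Tp_eq hT).comp (blocks_injective hJ)
  simp only [Sum.comp_elim] at hblocks
  have key {x : Fin K → Bool} (hx : {k | x k = true}.Subsingleton) :=
    (isIdentityBlock_of_R1_of_R2 hR1 hR2 hu).apply_eq_and_weight_eq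
      (isIdentityBlock_of_R1_of_R2 hR1 hR2 hv) (isIdentityBlock_of_R1_of_R2 hR1b hR2b hu)
      (isIdentityBlock_of_R1_of_R2 hR1b hR2b hv) hblocks hp hpb
      (fun k => let ⟨j, hj, hjk⟩ := hC2 k; ⟨⟨j, hj⟩, hjk⟩) hx
  have hitem {x : Fin K → Bool} (hx : {k | x k = true}.Subsingleton) {j : Fin J}
      (hj : (j : ℕ) < 2 * K) : θ j x = θb j x := by
    obtain ⟨k, rfl | rfl⟩ := exists_eq_firstItem_or_secondItem hJ hj
    · exact (key hx).1 k
    · exact (key hx).2.1 k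
  have hzero : {k | allZero K k = true}.Subsingleton := by simp [allZero]
  exact ⟨fun j hj => ⟨hitem hzero hj, fun k => hitem (subsingleton_setOf_decide_eq k) hj⟩,
    (key hzero).2.2, fun k => (key (subsingleton_setOf_decide_eq k)).2.2⟩

/-- **Step 3.** Under the standing hypotheses, `θ_{j,0} = θ̄_{j,0}` and
`θ_{j,e_k} = θ̄_{j,e_k}` for the first `2K` items, and `p_0 = p̄_0`,
`p_{e_k} = p̄_{e_k}`. -/
theorem step3_first_items_and_p_eq
    {J K : ℕ} (hJ : 2 * K ≤ J) (Q : Fin J → Fin K → Bool)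
    (θ θb : Fin J → (Fin K → Bool) → ℝ) (p pb : (Fin K → Bool) → ℝ)
    (hθ : ThetaValid θ) (hθb : ThetaValid θb) (hp : PValid p) (hpb : PValid pb)
    (hR1 : R1 Q θ) (hR1b : R1 Q θb) (hR2 : R2 Q θ) (hR2b : R2 Q θb)
    (hC1 : C1 Q) (hC2 : C2 θ)
    (hT : ∀ r : Fin J → Bool, Tp θ p r = Tp θb pb r) :
    (∀ j : Fin J, (j : ℕ) < 2 * K →
      θ j (allZero K) = θb j (allZero K) ∧
      ∀ k : Fin K, θ j (basis k) = θb j (basis k)) ∧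
    p (allZero K) = pb (allZero K) ∧
    (∀ k : Fin K, p (basis k) = pb (basis k)) := by
  exact step3_first_items_and_p_eq_general hJ (fun α => (hp.1 α).1) (fun α => (hpb.1 α).1)
    hR1 hR1b hR2 hR2b hC1 hC2 hT
end

section
/- (Step 5 of the proof of Theorem 1.) Under the standing hypotheses, for every attribute profile α ∈ {0,1}^K having at least three coordinates equal to 1 (i.e., α = e_{h_1} + ⋯ + e_{h_k} for distinct h_1, …, h_k with 3 ≤ k ≤ K) and every item j ∈ {1, …, J}: θ_{j,α} = θ̄_{j,α}, and moreover p_α = p̄_α. -/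
open Finset

/-!
Identify a profile with the set `s` of its attributes. The items `x k` of one identity block reach
their top value exactly on the sets containing `k`, so the products `∏ l ∈ S, (x l - top l)` are
triangular with respect to inclusion. Hence the products over the second block test every function
of the profile: a combination of first-block and extra items vanishes identically in one model if
and only if its counterpart vanishes in the other.

This transfer forces equal top values. Fix `k` and an extra item `z` with `z {k} ≠ z ∅`.
The products over `S ∌ k`, together with `∏ l ≠ k, (x l - top l) * (z - z ∅)`, are linearly
independent and outnumber the sets avoiding `k`. So some nonzero combination has a counterpart
vanishing on all sets avoiding `k`; multiplying by `x k - top' k` annihilates that counterpart,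
hence the combination itself, so `x k` takes the value `top' k`. Conversely, multiplying
`∏ l ≠ k, (x l - top l) * (z - z ∅)`, which is supported on `{k}`, by `x k - top k` annihilates it,
so `x' k` takes the value `top k`.

Once the top values agree, the moments built on `∏ l ∉ s, (x l - top l)` only involve subsets
of `s`, and all parameters are recovered by induction along inclusion.
-/

section ShiftedProducts

variable {R ι A : Type*} [CommRing R]

/-- The product over the items in `S` of the item parameters centred at `a`, as a function of the
latent class. -/
def shiftedProd (x : ι → A → R) (a : ι → R) (S : Finset ι) (s : A) : R :=
  ∏ l ∈ S, (x l s - a l)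

@[simp]
lemma shiftedProd_empty (x : ι → A → R) (a : ι → R) (s : A) : shiftedProd x a ∅ s = 1 :=
  prod_empty

@[simp]
lemma shiftedProd_singleton (x : ι → A → R) (a : ι → R) (l : ι) (s : A) :
    shiftedProd x a {l} s = x l s - a l :=
  prod_singleton _ _

lemma shiftedProd_insert_update [DecidableEq ι] (x : ι → A → R) (a : ι → R) {k : ι} (v : R)
    {S : Finset ι} (hk : k ∉ S) (s : A) :
    shiftedProd x (Function.update a k v) (insert k S) s = (x k s - v) * shiftedProd x a S s := by
  rw [shiftedProd, prod_insert hk, Function.update_self]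
  congr 1
  exact prod_congr rfl fun l hl => by rw [Function.update_of_ne (ne_of_mem_of_not_mem hl hk)]

lemma sum_mul_shiftedProd [Fintype A] [DecidableEq ι] (p : A → R) (x : ι → A → R) (a : ι → R)
    (S : Finset ι) :
    ∑ s, p s * shiftedProd x a S s =
      ∑ T ∈ S.powerset, (∑ s, p s * ∏ i ∈ T, x i s) * ∏ i ∈ S \ T, -a i := by
  simp only [shiftedProd, sub_eq_add_neg, prod_add, mul_sum, sum_mul]
  rw [sum_comm]
  simp only [mul_assoc]

end ShiftedProducts

lemma eq_zero_of_sum_mul_eq_zero_of_disjointness {R κ : Type*} [CommRing R] [NoZeroDivisors R]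
    {D : Finset κ → Finset κ → R} (hD : ∀ S s, D S s ≠ 0 ↔ Disjoint S s) {U : Finset κ}
    {c : Finset κ → R} (h : ∀ s ⊆ U, ∑ S ∈ U.powerset, c S * D S s = 0) {S : Finset κ}
    (hS : S ⊆ U) : c S = 0 := by
  classical
  induction S using Finset.strongInduction with
  | H S ih =>
    have hdiag := h (U \ S) sdiff_subset
    rw [sum_eq_single_of_mem S (mem_powerset.2 hS)] at hdiag
    · exact (mul_eq_zero.1 hdiag).resolve_right ((hD _ _).2 disjoint_sdiff)
    · intro T hT hne
      by_cases hsub : T ⊆ S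
      · rw [ih T (hsub.ssubset_of_ne hne) (mem_powerset.1 hT), zero_mul]
      · have hmeet : ¬ Disjoint T (U \ S) := fun hdisj =>
          hsub fun l hl => by_contra fun hlS =>
            disjoint_left.1 hdisj hl (mem_sdiff.2 ⟨mem_powerset.1 hT hl, hlS⟩)
        rw [not_not.1 (mt (hD _ _).1 hmeet), mul_zero]

section Detection

variable {R κ : Type*} [Fintype κ]

/-- The value of each item of a block at the full attribute set. -/
def topValue (x : κ → Finset κ → R) (l : κ) : R := x l univ

/-- Item `l` of the block takes its top value exactly on the attribute sets containing `l`. This is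
what an identity block of the Q-matrix provides. -/
def Detects (x : κ → Finset κ → R) : Prop := ∀ l s, x l s = topValue x l ↔ l ∈ s

variable [CommRing R] [IsDomain R] {x : κ → Finset κ → R}

lemma Detects.shiftedProd_ne_zero_iff (hx : Detects x) (S s : Finset κ) :
    shiftedProd x (topValue x) S s ≠ 0 ↔ Disjoint S s := by
  simp only [shiftedProd, prod_ne_zero_iff, sub_ne_zero, ne_eq, hx _ s, disjoint_left]

lemma Detects.eq_zero_of_sum_mul_shiftedProd_eq_zero (hx : Detects x) {u : Finset κ → R}
    (h : ∀ T, ∑ s, u s * shiftedProd x (topValue x) T s = 0) : u = 0 := by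
  funext s
  refine eq_zero_of_sum_mul_eq_zero_of_disjointness
    (D := fun s T => shiftedProd x (topValue x) T s)
    (fun s T => (hx.shiftedProd_ne_zero_iff T s).trans disjoint_comm) (U := univ)
    (fun T _ => ?_) (subset_univ s)
  rw [powerset_univ]
  exact h T

variable [DecidableEq κ]

lemma Detects.shiftedProd_compl_self_ne_zero (hx : Detects x) (s : Finset κ) :
    shiftedProd x (topValue x) sᶜ s ≠ 0 :=
  (hx.shiftedProd_ne_zero_iff _ _).2 disjoint_compl_left

lemma Detects.shiftedProd_compl_eq_zero (hx : Detects x) {s t : Finset κ} (hts : ¬ t ⊆ s) :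
    shiftedProd x (topValue x) sᶜ t = 0 :=
  not_not.1 <| mt (hx.shiftedProd_ne_zero_iff _ _).1 fun h =>
    hts (disjoint_compl_left_iff.1 h)

/-- The products over the sets of items avoiding `k`, indexed by `some`, and, indexed by `none`, the
product over all items other than `k` times `z - c`. There is one function more than there are
attribute sets avoiding `k`. -/
def avoidingFamily (x : κ → Finset κ → R) (z : Finset κ → R) (a : κ → R) (c : R) (k : κ) :
    Option (univ.erase k).powerset → Finset κ → R
  | none, s => shiftedProd x a (univ.erase k) s * (z s - c)
  | some S, s => shiftedProd x a S s

variable {z : Finset κ → R} {k : κ}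

lemma Detects.avoidingFamily_none_eq_zero (hx : Detects x) {s : Finset κ} (hs : s ≠ {k}) :
    avoidingFamily x z (topValue x) (z ∅) k none s = 0 := by
  obtain rfl | hne := s.eq_empty_or_nonempty
  · rw [avoidingFamily, sub_self, mul_zero]
  · have hsub : ¬ s ⊆ {k} := fun h => hs ((hne.subset_singleton_iff).1 h)
    rw [avoidingFamily, ← compl_singleton, hx.shiftedProd_compl_eq_zero hsub, zero_mul]

lemma Detects.avoidingFamily_none_singleton_ne_zero (hx : Detects x) (hz : z {k} ≠ z ∅) :
    avoidingFamily x z (topValue x) (z ∅) k none {k} ≠ 0 := by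
  rw [avoidingFamily, ← compl_singleton]
  exact mul_ne_zero (hx.shiftedProd_compl_self_ne_zero {k}) (sub_ne_zero.2 hz)

lemma Detects.linearIndependent_avoidingFamily (hx : Detects x) (hz : z {k} ≠ z ∅) :
    LinearIndependent R (avoidingFamily x z (topValue x) (z ∅) k) := by
  rw [Fintype.linearIndependent_iff]
  intro c hc
  have hrel (s : Finset κ) : c none * avoidingFamily x z (topValue x) (z ∅) k none s +
      ∑ S : (univ.erase k).powerset, c (some S) * shiftedProd x (topValue x) S s = 0 := by
    simpa [Fintype.sum_option, avoidingFamily] using congrFun hc s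
  have hsome (S : (univ.erase k).powerset) : c (some S) = 0 := by
    let d (S : Finset κ) : R := if hS : S ∈ (univ.erase k).powerset then c (some ⟨S, hS⟩) else 0
    have hd (S : (univ.erase k).powerset) : d S = c (some S) := dif_pos S.2
    rw [← hd]
    refine eq_zero_of_sum_mul_eq_zero_of_disjointness hx.shiftedProd_ne_zero_iff
      (fun s hs => ?_) (mem_powerset.1 S.2)
    have hsk : s ≠ {k} := by rintro rfl; simp at hs
    have hrel_s := hrel s
    rw [hx.avoidingFamily_none_eq_zero hsk, mul_zero, zero_add] at hrel_s
    rw [← sum_coe_sort]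
    simpa only [hd] using hrel_s
  have hnone : c none = 0 := by
    have hrel_k := hrel {k}
    simp only [hsome, zero_mul, sum_const_zero, add_zero] at hrel_k
    exact (mul_eq_zero.1 hrel_k).resolve_right (hx.avoidingFamily_none_singleton_ne_zero hz)
  exact Option.forall.2 ⟨hnone, hsome⟩

end Detection

lemma exists_sum_smul_ne_zero_and_eq_zero_on {R ι V B : Type*} [CommRing R] [IsDomain R]
    [Fintype ι] [AddCommGroup V] [Module R V] {v : ι → V} (hv : LinearIndependent R v)
    (w : ι → B → R) (s : Finset B) (hs : #s < Fintype.card ι) :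
    ∃ c : ι → R, ∑ i, c i • v i ≠ 0 ∧ ∀ b ∈ s, (∑ i, c i • w i) b = 0 := by
  have hdep : ¬ LinearIndependent R fun i (b : s) => w i b := fun hw => by
    have hcard := hw.fintype_card_le_finrank
    rw [Module.finrank_fintype_fun_eq_card, Fintype.card_coe] at hcard
    exact hs.not_ge hcard
  obtain ⟨c, hc, i, hi⟩ := Fintype.not_linearIndependent_iff.1 hdep
  refine ⟨c, fun h => hi (Fintype.linearIndependent_iff.1 hv c h i), fun b hb => ?_⟩
  simpa using congrFun hc ⟨b, hb⟩

/-- A latent class model with attribute sets as classes, two blocks of items indexed by the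
attributes, as in condition (C1), and further items indexed by `ζ`. -/
@[ext]
structure BlockModel (R κ ζ : Type*) where
  weight : Finset κ → R
  fst : κ → Finset κ → R
  snd : κ → Finset κ → R
  extra : ζ → Finset κ → R

namespace BlockModel

/-- The model with its two blocks exchanged. -/
def swap {R κ ζ : Type*} (M : BlockModel R κ ζ) : BlockModel R κ ζ :=
  ⟨M.weight, M.snd, M.fst, M.extra⟩

/-- All parameters of the two models at the attribute set `s` coincide. -/
structure AgreeAt {R κ ζ : Type*} (M M' : BlockModel R κ ζ) (s : Finset κ) : Prop where
  weight : M.weight s = M'.weight s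
  fst : ∀ l, M.fst l s = M'.fst l s
  snd : ∀ l, M.snd l s = M'.snd l s
  extra : ∀ j, M.extra j s = M'.extra j s

lemma AgreeAt.swap {R κ ζ : Type*} {M M' : BlockModel R κ ζ} {s : Finset κ}
    (h : AgreeAt M M' s) :
    AgreeAt M.swap M'.swap s :=
  ⟨h.weight, h.snd, h.fst, h.extra⟩

variable {R κ ζ : Type*} [Fintype κ] [CommRing R]

/-- Both blocks detect their attributes and no class has zero weight. -/
structure IsDetecting (M : BlockModel R κ ζ) : Prop where
  weight_ne_zero : ∀ s, M.weight s ≠ 0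
  fst_detects : Detects M.fst
  snd_detects : Detects M.snd

lemma IsDetecting.swap {M : BlockModel R κ ζ} (hM : M.IsDetecting) : M.swap.IsDetecting :=
  ⟨hM.weight_ne_zero, hM.snd_detects, hM.fst_detects⟩

/-- A detecting model in which the top value of each block item is its maximum. -/
structure IsRegular [LE R] (M : BlockModel R κ ζ) : Prop extends M.IsDetecting where
  fst_le : ∀ l s, M.fst l s ≤ topValue M.fst l
  snd_le : ∀ l s, M.snd l s ≤ topValue M.snd l

lemma IsRegular.swap [LE R] {M : BlockModel R κ ζ} (hM : M.IsRegular) : M.swap.IsRegular :=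
  ⟨hM.toIsDetecting.swap, hM.snd_le, hM.fst_le⟩

/-- The two models have the same joint moments of item parameters, centred at arbitrary constants.
Each item occurs at most once in a moment, as in the T-matrix. -/
def MomentEquiv (M M' : BlockModel R κ ζ) : Prop :=
  ∀ (S T : Finset κ) (E : Finset ζ) (a b : κ → R) (c : ζ → R),
    ∑ s, M.weight s * (shiftedProd M.fst a S s * shiftedProd M.extra c E s *
      shiftedProd M.snd b T s) =
    ∑ s, M'.weight s * (shiftedProd M'.fst a S s * shiftedProd M'.extra c E s *
      shiftedProd M'.snd b T s)

/-- The pairs of functions of the class, one for each model, that have the same moments against all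
centred products over the second block. -/
def matchedPairs (M M' : BlockModel R κ ζ) :
    Submodule R ((Finset κ → R) × (Finset κ → R)) where
  carrier := {F | ∀ (T : Finset κ) (b : κ → R),
    ∑ s, M.weight s * (F.1 s * shiftedProd M.snd b T s) =
      ∑ s, M'.weight s * (F.2 s * shiftedProd M'.snd b T s)}
  zero_mem' T b := by simp
  add_mem' hF hG T b := by
    simp only [Prod.fst_add, Prod.snd_add, Pi.add_apply, add_mul, mul_add, sum_add_distrib,
      hF T b, hG T b]
  smul_mem' r F hF T b := by
    simp only [Prod.smul_fst, Prod.smul_snd, Pi.smul_apply, smul_eq_mul, mul_assoc,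
      mul_left_comm _ r, ← mul_sum, hF T b]

variable {M M' : BlockModel R κ ζ} {f f' : Finset κ → R}

lemma matchedPairs_symm (h : (f, f') ∈ matchedPairs M M') : (f', f) ∈ matchedPairs M' M :=
  fun T b => (h T b).symm

lemma MomentEquiv.swap (h : MomentEquiv M M') : MomentEquiv M.swap M'.swap := by
  intro S T E a b c
  simpa only [BlockModel.swap, mul_comm, mul_left_comm] using h T S E b a c

lemma MomentEquiv.shiftedProd_mem_matchedPairs (h : MomentEquiv M M') (S : Finset κ) (a : κ → R) :
    (shiftedProd M.fst a S, shiftedProd M'.fst a S) ∈ matchedPairs M M' := by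
  intro T b
  simpa using h S T ∅ a b 0

lemma MomentEquiv.shiftedProd_mul_mem_matchedPairs (h : MomentEquiv M M') (S : Finset κ)
    (a : κ → R) (j : ζ) (c : R) :
    (fun s => shiftedProd M.fst a S s * (M.extra j s - c),
      fun s => shiftedProd M'.fst a S s * (M'.extra j s - c)) ∈ matchedPairs M M' := by
  intro T b
  simpa using h S T {j} a b fun _ => c

lemma MomentEquiv.avoidingFamily_mem_matchedPairs [DecidableEq κ] (h : MomentEquiv M M')
    (a : κ → R) (j : ζ) (c : R) (k : κ) (o : Option (univ.erase k).powerset) :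
    (avoidingFamily M.fst (M.extra j) a c k o, avoidingFamily M'.fst (M'.extra j) a c k o) ∈
      matchedPairs M M' := by
  cases o with
  | none => exact h.shiftedProd_mul_mem_matchedPairs _ a j c
  | some S => exact h.shiftedProd_mem_matchedPairs S a

lemma MomentEquiv.sub_mul_avoidingFamily_mem_matchedPairs [DecidableEq κ] (h : MomentEquiv M M')
    (a : κ → R) (j : ζ) (c : R) (k : κ) (v : R) (o : Option (univ.erase k).powerset) :
    (fun s => (M.fst k s - v) * avoidingFamily M.fst (M.extra j) a c k o s,
      fun s => (M'.fst k s - v) * avoidingFamily M'.fst (M'.extra j) a c k o s) ∈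
      matchedPairs M M' := by
  cases o with
  | none =>
    simpa only [shiftedProd_insert_update _ _ _ (notMem_erase k univ), mul_assoc, avoidingFamily]
      using h.shiftedProd_mul_mem_matchedPairs (insert k (univ.erase k)) (Function.update a k v) j c
  | some S =>
    have hkS : k ∉ S.1 := fun hk => notMem_erase k univ (mem_powerset.1 S.2 hk)
    simpa only [← shiftedProd_insert_update _ _ _ hkS, avoidingFamily]
      using h.shiftedProd_mem_matchedPairs (insert k S.1) (Function.update a k v)

lemma MomentEquiv.sub_mul_sum_avoidingFamily_mem_matchedPairs [DecidableEq κ] (h : MomentEquiv M M')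
    (a : κ → R) (j : ζ) (c : R) (k : κ) (v : R) (d : Option (univ.erase k).powerset → R) :
    (fun s => (M.fst k s - v) * (∑ o, d o • avoidingFamily M.fst (M.extra j) a c k o) s,
      fun s => (M'.fst k s - v) * (∑ o, d o • avoidingFamily M'.fst (M'.extra j) a c k o) s) ∈
      matchedPairs M M' := by
  convert Submodule.sum_mem _ (t := univ) fun o _ => Submodule.smul_mem _ (d o)
    (h.sub_mul_avoidingFamily_mem_matchedPairs a j c k v o) using 1
  ext s <;>
    simp only [Prod.fst_sum, Prod.snd_sum, Finset.sum_apply, Pi.smul_apply, Prod.smul_fst,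
      Prod.smul_snd, smul_eq_mul, mul_sum, mul_left_comm (d _)]

variable [IsDomain R]

lemma IsDetecting.eq_zero_of_mem_matchedPairs (hM : M.IsDetecting)
    (hf : (f, f') ∈ matchedPairs M M') (hf' : f' = 0) : f = 0 := by
  subst hf'
  have hweight : (fun s => M.weight s * f s) = 0 := by
    refine hM.snd_detects.eq_zero_of_sum_mul_shiftedProd_eq_zero fun T => ?_
    simpa [mul_assoc] using hf T (topValue M.snd)
  funext s
  exact (mul_eq_zero.1 (congrFun hweight s)).resolve_left (hM.weight_ne_zero s)

lemma MomentEquiv.exists_fst_left_eq_topValue_right (h : MomentEquiv M M') (hM : M.IsDetecting)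
    (hx' : Detects M'.fst) {k : κ} {j : ζ} (hj : M.extra j {k} ≠ M.extra j ∅) :
    ∃ s, M.fst k s = topValue M'.fst k := by
  classical
  let W' := avoidingFamily M'.fst (M'.extra j) (topValue M.fst) (M.extra j ∅) k
  have hcard : #(univ.erase k).powerset < Fintype.card (Option (univ.erase k).powerset) := by
    rw [Fintype.card_option, Fintype.card_coe]
    exact Nat.lt_succ_self _
  obtain ⟨d, hne, hzero⟩ := exists_sum_smul_ne_zero_and_eq_zero_on
    (hM.fst_detects.linearIndependent_avoidingFamily hj) W' (univ.erase k).powerset hcard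
  have hannihilated : (fun s => (M'.fst k s - topValue M'.fst k) * (∑ o, d o • W' o) s) = 0 := by
    funext s
    by_cases hks : k ∈ s
    · simp [(hx' k s).2 hks]
    · simp [hzero s (by simpa [subset_erase] using hks)]
  by_contra! hvalue
  refine hne (funext fun s => ?_)
  have hprod := congrFun (hM.eq_zero_of_mem_matchedPairs
    (h.sub_mul_sum_avoidingFamily_mem_matchedPairs _ j _ k _ d) hannihilated) s
  exact (mul_eq_zero.1 hprod).resolve_left (sub_ne_zero.2 (hvalue s))

lemma MomentEquiv.exists_fst_right_eq_topValue_left (h : MomentEquiv M M') (hM : M.IsDetecting)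
    (hM' : M'.IsDetecting) {k : κ} {j : ζ} (hj : M.extra j {k} ≠ M.extra j ∅) :
    ∃ s, M'.fst k s = topValue M.fst k := by
  classical
  by_contra! hvalue
  refine hM.fst_detects.avoidingFamily_none_singleton_ne_zero hj ?_
  have hannihilated : (fun s => (M.fst k s - topValue M.fst k) * avoidingFamily M.fst (M.extra j)
      (topValue M.fst) (M.extra j ∅) k none s) = 0 := by
    funext s
    obtain rfl | hs := eq_or_ne s {k}
    · simp [(hM.fst_detects k {k}).2 (mem_singleton_self k)]
    · simp [hM.fst_detects.avoidingFamily_none_eq_zero hs]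
  have hprod := hM'.eq_zero_of_mem_matchedPairs (matchedPairs_symm
    (h.sub_mul_avoidingFamily_mem_matchedPairs _ j _ k _ none)) hannihilated
  refine congrFun (hM.eq_zero_of_mem_matchedPairs
    (h.avoidingFamily_mem_matchedPairs _ j _ k none) (funext fun s => ?_)) {k}
  exact (mul_eq_zero.1 (congrFun hprod s)).resolve_left (sub_ne_zero.2 (hvalue s))

lemma MomentEquiv.topValue_fst_eq [PartialOrder R] (h : MomentEquiv M M') (hM : M.IsRegular)
    (hM' : M'.IsRegular) (hextra : ∀ k, ∃ j, M.extra j {k} ≠ M.extra j ∅) :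
    topValue M.fst = topValue M'.fst := by
  funext k
  obtain ⟨j, hj⟩ := hextra k
  obtain ⟨s, hs⟩ := h.exists_fst_left_eq_topValue_right hM.toIsDetecting hM'.fst_detects hj
  obtain ⟨t, ht⟩ := h.exists_fst_right_eq_topValue_left hM.toIsDetecting hM'.toIsDetecting hj
  exact le_antisymm (ht ▸ hM'.fst_le k t) (hs ▸ hM.fst_le k s)

lemma MomentEquiv.term_eq_of_agree_below [DecidableEq κ] (h : MomentEquiv M M')
    (hx : Detects M.fst) (hx' : Detects M'.fst) (htop : topValue M.fst = topValue M'.fst)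
    {s : Finset κ} (ih : ∀ t ⊂ s, AgreeAt M M' t) (T : Finset κ) (E : Finset ζ) :
    M.weight s * (shiftedProd M.fst (topValue M.fst) sᶜ s * shiftedProd M.extra 0 E s *
      shiftedProd M.snd 0 T s) =
    M'.weight s * (shiftedProd M'.fst (topValue M.fst) sᶜ s * shiftedProd M'.extra 0 E s *
      shiftedProd M'.snd 0 T s) := by
  have hmoment := h sᶜ T E (topValue M.fst) 0 0
  rw [← add_sum_erase _ _ (mem_univ s), ← add_sum_erase _ _ (mem_univ s)] at hmoment
  refine add_right_cancel (hmoment.trans (congrArg _ (sum_congr rfl fun t ht => Eq.symm ?_)))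
  by_cases hsub : t ⊆ s
  · have hagree := ih t (hsub.ssubset_of_ne (ne_of_mem_erase ht))
    simp only [shiftedProd, hagree.weight, hagree.fst, hagree.snd, hagree.extra]
  · rw [hx.shiftedProd_compl_eq_zero hsub, htop, hx'.shiftedProd_compl_eq_zero hsub]
    simp only [zero_mul, mul_zero]

lemma MomentEquiv.weight_mul_shiftedProd_eq_of_agree_below [DecidableEq κ] (h : MomentEquiv M M')
    (hx : Detects M.fst) (hx' : Detects M'.fst) (htop : topValue M.fst = topValue M'.fst)
    {s : Finset κ} (ih : ∀ t ⊂ s, AgreeAt M M' t) :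
    M.weight s * shiftedProd M.fst (topValue M.fst) sᶜ s =
      M'.weight s * shiftedProd M'.fst (topValue M.fst) sᶜ s := by
  simpa using h.term_eq_of_agree_below hx hx' htop ih ∅ ∅

lemma MomentEquiv.snd_eq_of_agree_below (h : MomentEquiv M M') (hM : M.IsDetecting)
    (hx' : Detects M'.fst) (htop : topValue M.fst = topValue M'.fst) {s : Finset κ}
    (ih : ∀ t ⊂ s, AgreeAt M M' t) (l : κ) : M.snd l s = M'.snd l s := by
  classical
  refine mul_left_cancel₀ (mul_ne_zero (hM.weight_ne_zero s)
    (hM.fst_detects.shiftedProd_compl_self_ne_zero s)) ?_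
  have hmoment := h.term_eq_of_agree_below hM.fst_detects hx' htop ih {l} ∅
  simp only [shiftedProd_empty, shiftedProd_singleton, Pi.zero_apply, sub_zero, mul_one,
    ← mul_assoc] at hmoment
  rw [hmoment, h.weight_mul_shiftedProd_eq_of_agree_below hM.fst_detects hx' htop ih]

lemma MomentEquiv.extra_eq_of_agree_below (h : MomentEquiv M M') (hM : M.IsDetecting)
    (hx' : Detects M'.fst) (htop : topValue M.fst = topValue M'.fst) {s : Finset κ}
    (ih : ∀ t ⊂ s, AgreeAt M M' t) (j : ζ) : M.extra j s = M'.extra j s := by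
  classical
  refine mul_left_cancel₀ (mul_ne_zero (hM.weight_ne_zero s)
    (hM.fst_detects.shiftedProd_compl_self_ne_zero s)) ?_
  have hmoment := h.term_eq_of_agree_below hM.fst_detects hx' htop ih ∅ {j}
  simp only [shiftedProd_empty, shiftedProd_singleton, Pi.zero_apply, sub_zero, mul_one,
    ← mul_assoc] at hmoment
  rw [hmoment, h.weight_mul_shiftedProd_eq_of_agree_below hM.fst_detects hx' htop ih]

lemma MomentEquiv.agreeAt (h : MomentEquiv M M') (hM : M.IsDetecting) (hM' : M'.IsDetecting)
    (hfst : topValue M.fst = topValue M'.fst) (hsnd : topValue M.snd = topValue M'.snd)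
    (s : Finset κ) : AgreeAt M M' s := by
  classical
  induction s using Finset.strongInduction with
  | H s ih =>
    have hx : ∀ l, M.fst l s = M'.fst l s :=
      h.swap.snd_eq_of_agree_below hM.swap hM'.snd_detects hsnd fun t ht => (ih t ht).swap
    refine ⟨?_, hx, h.snd_eq_of_agree_below hM hM'.fst_detects hfst ih,
      h.extra_eq_of_agree_below hM hM'.fst_detects hfst ih⟩
    refine mul_right_cancel₀ (hM.fst_detects.shiftedProd_compl_self_ne_zero s) ?_
    rw [h.weight_mul_shiftedProd_eq_of_agree_below hM.fst_detects hM'.fst_detects hfst ih]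
    simp only [shiftedProd, hx]

theorem MomentEquiv.eq [PartialOrder R] (h : MomentEquiv M M') (hM : M.IsRegular)
    (hM' : M'.IsRegular) (hextra : ∀ k, ∃ j, M.extra j {k} ≠ M.extra j ∅) : M = M' := by
  have hagree := h.agreeAt hM.toIsDetecting hM'.toIsDetecting
    (h.topValue_fst_eq hM hM' hextra) (h.swap.topValue_fst_eq hM.swap hM'.swap hextra)
  ext s
  · exact (hagree s).weight
  · exact (hagree _).fst s
  · exact (hagree _).snd s
  · exact (hagree _).extra s

end BlockModel

section Profiles

variable {J K : ℕ}

/-- The correspondence between attribute sets and profiles. -/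
def profile (K : ℕ) : Finset (Fin K) ≃ (Fin K → Bool) where
  toFun s i := decide (i ∈ s)
  invFun α := univ.filter fun i => α i = true
  left_inv s := by ext; simp
  right_inv α := by ext; simp

lemma profile_apply_eq_true {s : Finset (Fin K)} {i : Fin K} : profile K s i = true ↔ i ∈ s :=
  decide_eq_true_iff

lemma profile_apply_eq_false {s : Finset (Fin K)} {i : Fin K} : profile K s i = false ↔ i ∉ s :=
  decide_eq_false_iff_not

lemma profile_empty : profile K ∅ = allZero K := by
  funext i
  simp [profile, allZero]

lemma profile_singleton (k : Fin K) : profile K {k} = basis k := by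
  funext i
  simp [profile, basis]

lemma profile_univ : profile K univ = allOne K := by
  funext i
  simp [profile, allOne]

/-- The positions of the items: the two identity blocks of condition (C1), then all others. -/
def itemPosition (hJ : 2 * K ≤ J) : Fin K ⊕ Fin K ⊕ {j : Fin J // 2 * K ≤ (j : ℕ)} → Fin J
  | .inl k => ⟨k, by omega⟩
  | .inr (.inl k) => ⟨K + k, by omega⟩
  | .inr (.inr j) => j

lemma itemPosition_injective (hJ : 2 * K ≤ J) : Function.Injective (itemPosition hJ) := by
  rintro (k | k | ⟨j, hj⟩) (l | l | ⟨i, hi⟩) h <;>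
    simp only [itemPosition, Fin.ext_iff, Sum.inl.injEq, Sum.inr.injEq, Subtype.mk.injEq,
      reduceCtorEq] at h ⊢ <;> omega

lemma itemPosition_surjective (hJ : 2 * K ≤ J) : Function.Surjective (itemPosition hJ) := by
  intro j
  obtain hfst | hfst := lt_or_ge (j : ℕ) K
  · exact ⟨.inl ⟨j, hfst⟩, rfl⟩
  obtain hsnd | hextra := lt_or_ge (j : ℕ) (2 * K)
  · exact ⟨.inr (.inl ⟨j - K, by omega⟩), Fin.ext (Nat.add_sub_cancel' hfst)⟩
  · exact ⟨.inr (.inr ⟨j, hextra⟩), rfl⟩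

/-- The block model given by item parameters `θ` and a class distribution `p`. -/
def blockModel (hJ : 2 * K ≤ J) (θ : Fin J → (Fin K → Bool) → ℝ) (p : (Fin K → Bool) → ℝ) :
    BlockModel ℝ (Fin K) {j : Fin J // 2 * K ≤ (j : ℕ)} where
  weight s := p (profile K s)
  fst k s := θ (itemPosition hJ (.inl k)) (profile K s)
  snd k s := θ (itemPosition hJ (.inr (.inl k))) (profile K s)
  extra j s := θ (itemPosition hJ (.inr (.inr j))) (profile K s)

lemma eq_of_blockModel_eq (hJ : 2 * K ≤ J) {θ θb : Fin J → (Fin K → Bool) → ℝ}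
    {p pb : (Fin K → Bool) → ℝ} (h : blockModel hJ θ p = blockModel hJ θb pb) :
    θ = θb ∧ p = pb := by
  simp only [blockModel, BlockModel.mk.injEq, funext_iff, (profile K).forall_congr_left,
    Equiv.apply_symm_apply] at h
  obtain ⟨hweight, hfst, hsnd, hextra⟩ := h
  refine ⟨funext fun j => ?_, funext hweight⟩
  obtain ⟨k | k | i, rfl⟩ := itemPosition_surjective hJ j
  · exact funext (hfst k)
  · exact funext (hsnd k)
  · exact funext (hextra i)

lemma Tp_decide_mem (θ : Fin J → (Fin K → Bool) → ℝ) (p : (Fin K → Bool) → ℝ)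
    (E : Finset (Fin J)) : Tp θ p (fun j => decide (j ∈ E)) = ∑ α, p α * ∏ j ∈ E, θ j α := by
  simp only [Tp, tEntry, decide_eq_true_eq, prod_ite_mem, univ_inter, mul_comm]

lemma momentEquiv_blockModel (hJ : 2 * K ≤ J) {θ θb : Fin J → (Fin K → Bool) → ℝ}
    {p pb : (Fin K → Bool) → ℝ} (hT : ∀ r, Tp θ p r = Tp θb pb r) :
    (blockModel hJ θ p).MomentEquiv (blockModel hJ θb pb) := by
  intro S T E a b c
  have hmoment (F : Finset (Fin K ⊕ Fin K ⊕ {j : Fin J // 2 * K ≤ (j : ℕ)})) :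
      ∑ α, p α * ∏ i ∈ F, θ (itemPosition hJ i) α =
        ∑ α, pb α * ∏ i ∈ F, θb (itemPosition hJ i) α := by
    simpa only [Tp_decide_mem, prod_map, Function.Embedding.coeFn_mk] using
      hT fun j => decide (j ∈ F.map ⟨itemPosition hJ, itemPosition_injective hJ⟩)
  have hshifted : ∑ α, p α * shiftedProd (fun i => θ (itemPosition hJ i))
        (Sum.elim a (Sum.elim b c)) (S.disjSum (T.disjSum E)) α =
      ∑ α, pb α * shiftedProd (fun i => θb (itemPosition hJ i))
        (Sum.elim a (Sum.elim b c)) (S.disjSum (T.disjSum E)) α := by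
    simp only [sum_mul_shiftedProd, hmoment]
  rw [← (profile K).sum_comp, ← (profile K).sum_comp] at hshifted
  simpa only [shiftedProd, prod_disjSum, Sum.elim_inl, Sum.elim_inr, blockModel, mul_assoc,
    mul_comm (∏ _ ∈ T, _)] using hshifted

/-- The part of restriction (R1) that concerns the items requiring a single attribute: all profiles
with that attribute share one parameter. -/
def ConstOnMastery (Q : Fin J → Fin K → Bool) (θ : Fin J → (Fin K → Bool) → ℝ) : Prop :=
  ∀ (k : Fin K) (j : Fin J), Q j = basis k →
    ∀ α : Fin K → Bool, α k = true → θ j α = θ j (allOne K)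

variable {Q : Fin J → Fin K → Bool} {θ : Fin J → (Fin K → Bool) → ℝ}

lemma R1.constOnMastery (hR1 : R1 Q θ) : ConstOnMastery Q θ := by
  intro k j hj α hα
  refine (hR1 j).1 α (allOne K) (fun i hi => ?_) fun _ _ => rfl
  rw [hj, basis, decide_eq_true_eq] at hi
  rwa [hi]

lemma detects_of_eq_basis (hconst : ConstOnMastery Q θ) (hR2 : R2 Q θ) {e : Fin K → Fin J}
    (he : ∀ k, Q (e k) = basis k) : Detects fun k s => θ (e k) (profile K s) := by
  intro k s
  rw [topValue, profile_univ]
  refine ⟨fun heq => ?_, fun hk => hconst k _ (he k) _ (profile_apply_eq_true.2 hk)⟩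
  by_contra hk
  exact (hR2 k _ (he k) _ (profile_apply_eq_false.2 hk)).ne heq

lemma le_topValue_of_eq_basis (hconst : ConstOnMastery Q θ) (hR2 : R2 Q θ) {e : Fin K → Fin J}
    (he : ∀ k, Q (e k) = basis k) (k : Fin K) (s : Finset (Fin K)) :
    θ (e k) (profile K s) ≤ topValue (fun k s => θ (e k) (profile K s)) k := by
  rw [topValue, profile_univ]
  by_cases hk : k ∈ s
  · exact (hconst k _ (he k) _ (profile_apply_eq_true.2 hk)).le
  · exact (hR2 k _ (he k) _ (profile_apply_eq_false.2 hk)).le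

lemma isRegular_blockModel (hJ : 2 * K ≤ J) {p : (Fin K → Bool) → ℝ} (hp : ∀ α, p α ≠ 0)
    (hconst : ConstOnMastery Q θ) (hR2 : R2 Q θ) (hC1 : C1 Q) :
    (blockModel hJ θ p).IsRegular := by
  have hfst (k : Fin K) : Q (itemPosition hJ (.inl k)) = basis k :=
    (hC1 k (by omega) (by omega)).1
  have hsnd (k : Fin K) : Q (itemPosition hJ (.inr (.inl k))) = basis k :=
    (hC1 k (by omega) (by omega)).2
  exact {
    weight_ne_zero s := hp _
    fst_detects := detects_of_eq_basis hconst hR2 hfst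
    snd_detects := detects_of_eq_basis hconst hR2 hsnd
    fst_le := le_topValue_of_eq_basis hconst hR2 hfst
    snd_le := le_topValue_of_eq_basis hconst hR2 hsnd }

lemma exists_extra_singleton_ne_empty (hJ : 2 * K ≤ J) (p : (Fin K → Bool) → ℝ) (hC2 : C2 θ)
    (k : Fin K) :
    ∃ j, (blockModel hJ θ p).extra j {k} ≠ (blockModel hJ θ p).extra j ∅ := by
  obtain ⟨j, hj, hne⟩ := hC2 k
  exact ⟨⟨j, hj⟩, by
    simpa only [blockModel, itemPosition, profile_singleton, profile_empty] using hne⟩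

end Profiles

theorem step5_higher_order_eq_general
    {J K : ℕ} (hJ : 2 * K ≤ J) (Q : Fin J → Fin K → Bool)
    (θ θb : Fin J → (Fin K → Bool) → ℝ) (p pb : (Fin K → Bool) → ℝ)
    (hp : ∀ α, p α ≠ 0) (hpb : ∀ α, pb α ≠ 0)
    (hconst : ConstOnMastery Q θ) (hconstb : ConstOnMastery Q θb)
    (hR2 : R2 Q θ) (hR2b : R2 Q θb) (hC1 : C1 Q) (hC2 : C2 θ)
    (hT : ∀ r : Fin J → Bool, Tp θ p r = Tp θb pb r) :
    θ = θb ∧ p = pb :=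
  eq_of_blockModel_eq hJ <| (momentEquiv_blockModel hJ hT).eq
    (isRegular_blockModel hJ hp hconst hR2 hC1) (isRegular_blockModel hJ hpb hconstb hR2b hC1)
    (exists_extra_singleton_ne_empty hJ p hC2)

/-- **Step 5.** Under the standing hypotheses, for every profile `α` with at least
three coordinates equal to one, `θ_{j,α} = θ̄_{j,α}` for every item `j`, and
`p_α = p̄_α`. -/
theorem step5_higher_order_eq
    {J K : ℕ} (hJ : 2 * K ≤ J) (Q : Fin J → Fin K → Bool)
    (θ θb : Fin J → (Fin K → Bool) → ℝ) (p pb : (Fin K → Bool) → ℝ)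
    (hθ : ThetaValid θ) (hθb : ThetaValid θb) (hp : PValid p) (hpb : PValid pb)
    (hR1 : R1 Q θ) (hR1b : R1 Q θb) (hR2 : R2 Q θ) (hR2b : R2 Q θb)
    (hC1 : C1 Q) (hC2 : C2 θ)
    (hT : ∀ r : Fin J → Bool, Tp θ p r = Tp θb pb r) :
    ∀ α : Fin K → Bool, 3 ≤ (Finset.univ.filter fun i => α i = true).card →
      (∀ j : Fin J, θ j α = θb j α) ∧ p α = pb α := by
  obtain ⟨rfl, rfl⟩ := step5_higher_order_eq_general hJ Q θ θb p pb (fun α => (hp.1 α).1.ne')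
    (fun α => (hpb.1 α).1.ne') hR1.constOnMastery hR1b.constOnMastery hR2 hR2b hC1 hC2 hT
  exact fun _ _ => ⟨fun _ => rfl, rfl⟩
end
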